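/- arXiv:1305.4559 — 4 statements merged into one kernel-verified Lean document; each statement's English description precedes it below -/
import Mathlib

section
/- For every ε > 0 there exists N such that for every finite connected simple graph G on n ≥ N vertices and every pair of starting vertices u (cop) and v (robber), there is a cop strategy for the cop-and-drunk game on G whose expected capture time is at most (1 + ε)·n. (Equivalently: a suitable cop captures the drunk robber in expected time n + o(n), uniformly over all connected n-vertex graphs and starting positions.) -/
open scoped Classical ENNReal

/-! ## The cop-and-drunk game

A cop starts at `u`, a robber at `v`.  In each move the cop steps to an adjacent vertex
(seeing everything), then the robber steps to a uniformly random adjacent vertex.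
A cop strategy is a function assigning to each finite history of play (equivalently, to the
finite sequence of robber positions observed so far, which together with the strategy itself
determines the whole history) the cop's next vertex.  Capture occurs the first time the two
players occupy the same vertex, whether after the cop's step or after the robber's step, and
the capture time is the index of that move.  The expected capture time is computed as
`∑_{k≥0} P(T > k)` in `ℝ≥0∞`, where the probability of a robber trajectory is the product of
the transition weights `1/deg` of the simple random walk (so non-walk trajectories get
weight `0`). -/

/-- The cop's position after move `k`, given strategy `σ`, starting vertex `u`, and the
robber's trajectory `r` (the strategy sees the history `r 0, …, r (k-1)`). -/
def copPos {V : Type} (σ : List V → V) (u : V) (r : ℕ → V) : ℕ → V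
  | 0 => u
  | k + 1 => σ (List.ofFn fun i : Fin (k + 1) => r i)

/-- A strategy is valid for `G` if the cop always moves from her current vertex to an
adjacent vertex. -/
def ValidStrategy {V : Type} (G : SimpleGraph V) (σ : List V → V) (u : V) : Prop :=
  ∀ (r : ℕ → V) (k : ℕ), G.Adj (copPos σ u r k) (copPos σ u r (k + 1))

/-- The robber following trajectory `r` has been captured by the end of move `k`
(including capture at time `0` in case the two players start on the same vertex):
at some move `j ≤ k`, either the cop stepped onto the robber's current vertex, or the
robber stepped onto the cop's vertex. -/
def CapturedBy {V : Type} (σ : List V → V) (u : V) (r : ℕ → V) (k : ℕ) : Prop :=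
  r 0 = u ∨ ∃ j, 1 ≤ j ∧ j ≤ k ∧ (copPos σ u r j = r (j - 1) ∨ copPos σ u r j = r j)

/-- Probability weight of the first `k` steps of the trajectory `r` for the simple random
walk on `G`: the product of `1/deg` over the steps, and `0` if some step is not an edge. -/
noncomputable def pathWt {V : Type} [Fintype V] (G : SimpleGraph V) (r : ℕ → V) (k : ℕ) :
    ℝ≥0∞ :=
  ∏ i ∈ Finset.range k, if G.Adj (r i) (r (i + 1)) then ((G.degree (r i) : ℝ≥0∞))⁻¹ else 0

/-- Extend a finite trajectory to an infinite one (constant after time `k`). -/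
def pad {V : Type} (k : ℕ) (q : Fin (k + 1) → V) : ℕ → V :=
  fun i => q ⟨min i k, Nat.lt_succ_of_le (Nat.min_le_right i k)⟩

/-- The probability that the robber, starting at `v` and performing a simple random walk on
`G`, survives (is not yet captured) through the end of move `k`, against the cop playing
strategy `σ` from `u`. -/
noncomputable def survival {V : Type} [Fintype V] (G : SimpleGraph V) (σ : List V → V)
    (u v : V) (k : ℕ) : ℝ≥0∞ :=
  ∑ q : Fin (k + 1) → V,
    if q 0 = v ∧ ¬ CapturedBy σ u (pad k q) k then pathWt G (pad k q) k else 0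

/-- The expected capture time `E[T] = ∑_{k ≥ 0} P(T > k)` of the cop-and-drunk game on `G`,
with the cop starting at `u` playing strategy `σ` and the robber starting at `v`. -/
noncomputable def expCaptureTime {V : Type} [Fintype V] (G : SimpleGraph V) (σ : List V → V)
    (u v : V) : ℝ≥0∞ :=
  ∑' k : ℕ, survival G σ u v k

namespace CopDrunk

section Operator
variable {V : Type} [Fintype V] (G : SimpleGraph V)

/-- Transition weights of the simple random walk. -/
noncomputable def wt (v w : V) : ℝ := if G.Adj v w then (G.degree v : ℝ)⁻¹ else 0

/-- The transition operator. -/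
noncomputable def PL : Module.End ℝ (V → ℝ) where
  toFun f v := ∑ w, wt G v w * f w
  map_add' f g := by
    funext v; simp [mul_add, Finset.sum_add_distrib]
  map_smul' c f := by
    funext v; simp only [Pi.smul_apply, smul_eq_mul, RingHom.id_apply, Finset.mul_sum]
    exact Finset.sum_congr rfl fun _ _ => by ring

theorem PL_apply (f : V → ℝ) (v : V) : PL G f v = ∑ w, wt G v w * f w := rfl

theorem wt_nonneg (v w : V) : 0 ≤ wt G v w := by
  unfold wt; split_ifs <;> positivity

theorem PL_mono {f g : V → ℝ} (h : ∀ w, f w ≤ g w) (v : V) : PL G f v ≤ PL G g v :=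
  Finset.sum_le_sum fun w _ => mul_le_mul_of_nonneg_left (h w) (wt_nonneg G v w)

theorem PL_mono' {f g : V → ℝ} (v : V) (h : ∀ w, G.Adj v w → f w ≤ g w) :
    PL G f v ≤ PL G g v := by
  refine Finset.sum_le_sum fun w _ => ?_
  by_cases hw : G.Adj v w
  · exact mul_le_mul_of_nonneg_left (h w hw) (wt_nonneg G v w)
  · simp [wt, hw]

theorem PL_eq_avg (f : V → ℝ) (v : V) :
    PL G f v = (G.degree v : ℝ)⁻¹ * ∑ w ∈ G.neighborFinset v, f w := by
  rw [PL_apply, Finset.mul_sum, SimpleGraph.neighborFinset_eq_filter, Finset.sum_filter]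
  refine Finset.sum_congr rfl fun w _ => ?_
  unfold wt; split_ifs <;> simp

theorem sum_wt {v : V} (hv : 0 < G.degree v) : ∑ w, wt G v w = 1 := by
  have := PL_eq_avg G (fun _ => 1) v
  rw [PL_apply] at this
  simp only [mul_one, Finset.sum_const, SimpleGraph.card_neighborFinset_eq_degree, nsmul_eq_mul] at this
  rw [this]
  have : (G.degree v : ℝ) ≠ 0 := by positivity
  field_simp

theorem PL_const (hd : ∀ v, 0 < G.degree v) (c : ℝ) : PL G (fun _ => c) = fun _ => c := by
  funext v
  rw [PL_apply, ← Finset.sum_mul, sum_wt G (hd v), one_mul]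

theorem PLpow_mono (t : ℕ) {f g : V → ℝ} (h : ∀ w, f w ≤ g w) (v : V) :
    (PL G ^ t) f v ≤ (PL G ^ t) g v := by
  induction t generalizing v with
  | zero => simpa using h v
  | succ t ih =>
    rw [pow_succ']
    exact PL_mono G ih v

theorem PLpow_const (hd : ∀ v, 0 < G.degree v) (t : ℕ) (c : ℝ) :
    (PL G ^ t) (fun _ => c) = fun _ => c := by
  induction t with
  | zero => rfl
  | succ t ih =>
    rw [pow_succ', Module.End.mul_apply, ih, PL_const G hd]

/-- the walk moves at most distance `t` in `t` steps. -/
theorem PLpow_mono_dist (hG : G.Connected) (t : ℕ) {f g : V → ℝ} (v : V)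
    (h : ∀ w, G.dist v w ≤ t → f w ≤ g w) :
    (PL G ^ t) f v ≤ (PL G ^ t) g v := by
  induction t generalizing v with
  | zero => simpa using h v (by simp)
  | succ t ih =>
    rw [pow_succ']
    refine PL_mono' G v fun w hw => ih w fun z hz => h z ?_
    have := hG.dist_triangle (u := v) (v := w) (w := z)
    have h1 : G.dist v w = 1 := SimpleGraph.dist_eq_one_iff_adj.2 hw
    omega

/-- degree-weighted inner product -/
noncomputable def ip (f g : V → ℝ) : ℝ := ∑ v, (G.degree v : ℝ) * (f v * g v)

theorem deg_mul_wt (v w : V) (hv : 0 < G.degree v) :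
    (G.degree v : ℝ) * wt G v w = if G.Adj v w then 1 else 0 := by
  unfold wt
  have : (G.degree v : ℝ) ≠ 0 := by positivity
  split_ifs <;> simp [this]

theorem ip_PL_left (hd : ∀ v, 0 < G.degree v) (f g : V → ℝ) :
    ip G (PL G f) g = ∑ v, ∑ w, (if G.Adj v w then 1 else 0) * (f w * g v) := by
  unfold ip
  refine Finset.sum_congr rfl fun v _ => ?_
  rw [PL_apply, Finset.sum_mul, Finset.mul_sum]
  refine Finset.sum_congr rfl fun w _ => ?_
  rw [← deg_mul_wt G v w (hd v)]; ring

theorem ip_comm (f g : V → ℝ) : ip G f g = ip G g f := by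
  unfold ip; exact Finset.sum_congr rfl fun _ _ => by ring

theorem ip_symm (hd : ∀ v, 0 < G.degree v) (f g : V → ℝ) :
    ip G (PL G f) g = ip G f (PL G g) := by
  rw [ip_comm G f, ip_PL_left G hd, ip_PL_left G hd, Finset.sum_comm]
  refine Finset.sum_congr rfl fun v _ => Finset.sum_congr rfl fun w _ => ?_
  simp only [G.adj_comm w v]; ring

theorem PL_sq_le (v : V) (hv : 0 < G.degree v) (f : V → ℝ) :
    (PL G f v) ^ 2 ≤ PL G (fun w => f w ^ 2) v := by
  have h := sum_wt G hv
  have key : 0 ≤ ∑ w, wt G v w * (f w - PL G f v) ^ 2 :=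
    Finset.sum_nonneg fun w _ => mul_nonneg (wt_nonneg G v w) (sq_nonneg _)
  have e : ∑ w, wt G v w * (f w - PL G f v) ^ 2
      = PL G (fun w => f w ^ 2) v - 2 * PL G f v * (∑ w, wt G v w * f w)
        + PL G f v ^ 2 * ∑ w, wt G v w := by
    rw [PL_apply G (fun w => f w ^ 2), Finset.mul_sum, Finset.mul_sum, ← Finset.sum_sub_distrib,
      ← Finset.sum_add_distrib]
    exact Finset.sum_congr rfl fun w _ => by ring
  rw [e, h, ← PL_apply] at key
  nlinarith

theorem ip_contract (hd : ∀ v, 0 < G.degree v) (f : V → ℝ) :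
    ip G (PL G f) (PL G f) ≤ ip G f f := by
  calc ip G (PL G f) (PL G f) ≤ ip G (fun _ => 1) (PL G fun w => f w ^ 2) := by
        unfold ip
        refine Finset.sum_le_sum fun v _ => mul_le_mul_of_nonneg_left ?_ (by positivity)
        have := PL_sq_le G v (hd v) f
        nlinarith
    _ = ip G f f := by
        rw [← ip_symm G hd, PL_const G hd]
        unfold ip
        exact Finset.sum_congr rfl fun _ _ => by ring

theorem ip_add_right (f g h : V → ℝ) : ip G f (g + h) = ip G f g + ip G f h := by
  unfold ip
  rw [← Finset.sum_add_distrib]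
  exact Finset.sum_congr rfl fun _ _ => by simp; ring

theorem ip_smul_right (c : ℝ) (f g : V → ℝ) : ip G f (c • g) = c * ip G f g := by
  unfold ip
  rw [Finset.mul_sum]
  exact Finset.sum_congr rfl fun _ _ => by simp; ring

open Polynomial in
theorem ip_aeval (hd : ∀ v, 0 < G.degree v) (p : ℝ[X]) (f g : V → ℝ) :
    ip G (aeval (PL G) p f) g = ip G f (aeval (PL G) p g) := by
  induction p using Polynomial.induction_on' generalizing f g with
  | add p q hp hq =>
    rw [map_add, LinearMap.add_apply, LinearMap.add_apply, ip_add_right, ip_comm, ip_add_right,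
      ip_comm G g, ip_comm G g, hp, hq]
  | monomial n a =>
    have hpow : ∀ n : ℕ, ∀ f g, ip G ((PL G ^ n) f) g = ip G f ((PL G ^ n) g) := by
      intro n
      induction n with
      | zero => intro f g; rfl
      | succ n ih =>
        intro f g
        rw [pow_succ, Module.End.mul_apply, ih, ip_symm G hd, ← Module.End.mul_apply, ← pow_succ',
          ← pow_succ]
    rw [aeval_monomial]
    simp only [Module.End.mul_apply, Module.algebraMap_end_apply]
    rw [ip_comm, ip_smul_right, ip_smul_right, ip_comm, hpow]

open Polynomial in
theorem cheb_pell (n : ℤ) :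
    1 - Chebyshev.T ℝ n ^ 2 = (1 - X ^ 2) * Chebyshev.U ℝ (n - 1) ^ 2 := by
  have hU : ∀ n : ℤ, Chebyshev.U ℝ n ^ 2 + Chebyshev.U ℝ (n + 1) ^ 2
      - 2 * X * Chebyshev.U ℝ n * Chebyshev.U ℝ (n + 1) = 1 := by
    intro n
    have h := congrArg (fun p => p.comp (2 * X)) (Chebyshev.S_sq_add_S_sq ℝ n)
    simpa [Chebyshev.S_comp_two_mul_X] using h
  have h1 := hU (n - 1)
  rw [sub_add_cancel] at h1
  rw [Chebyshev.T_eq_U_sub_X_mul_U]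
  linear_combination -h1

open Polynomial in
theorem cheb_contract (hd : ∀ v, 0 < G.degree v) (n : ℤ) (f : V → ℝ) :
    ip G (aeval (PL G) (Chebyshev.T ℝ n) f) (aeval (PL G) (Chebyshev.T ℝ n) f) ≤ ip G f f := by
  set g := aeval (PL G) (Chebyshev.U ℝ (n - 1)) f with hg
  have e1 : ip G (aeval (PL G) (Chebyshev.T ℝ n) f) (aeval (PL G) (Chebyshev.T ℝ n) f)
      = ip G f (aeval (PL G) (Chebyshev.T ℝ n ^ 2) f) := by
    rw [ip_aeval G hd, pow_two, map_mul, Module.End.mul_apply]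
  have e2 : ip G g g = ip G f (aeval (PL G) (Chebyshev.U ℝ (n - 1) ^ 2) f) := by
    rw [hg, ip_aeval G hd, pow_two, map_mul, Module.End.mul_apply]
  have e3 : ip G (PL G g) (PL G g)
      = ip G f (aeval (PL G) (X ^ 2 * Chebyshev.U ℝ (n - 1) ^ 2) f) := by
    have : PL G g = aeval (PL G) (X * Chebyshev.U ℝ (n - 1)) f := by
      rw [map_mul, Module.End.mul_apply, aeval_X]
    rw [this, ip_aeval G hd, ← Module.End.mul_apply, ← map_mul]
    congr 3; ring
  have hp : (1 : ℝ[X]) + X ^ 2 * Chebyshev.U ℝ (n - 1) ^ 2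
      = Chebyshev.T ℝ n ^ 2 + Chebyshev.U ℝ (n - 1) ^ 2 := by
    linear_combination (-1 : ℝ[X]) * (-1 : ℝ[X]) * cheb_pell n
  have h := congrArg (fun p => ip G f (aeval (PL G) p f)) hp
  simp only [map_add, LinearMap.add_apply, ip_add_right, map_one, Module.End.one_apply] at h
  rw [← e1, ← e2, ← e3] at h
  have := ip_contract G hd g
  linarith

theorem PLpow_vanish (hG : G.Connected) (x : V) (r : ℕ) (h : V → ℝ)
    (hh : ∀ y, G.dist x y < r → h y = 0) (j : ℕ) (y : V) (hy : G.dist x y + j < r) :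
    (PL G ^ j) h y = 0 := by
  induction j generalizing y with
  | zero => simpa using hh y (by omega)
  | succ j ih =>
    rw [pow_succ', Module.End.mul_apply, PL_apply]
    refine Finset.sum_eq_zero fun w _ => ?_
    by_cases hw : G.Adj y w
    · rw [ih w ?_, mul_zero]
      have := hG.dist_triangle (u := x) (v := y) (w := w)
      have h1 : G.dist y w = 1 := SimpleGraph.dist_eq_one_iff_adj.2 hw
      omega
    · simp [wt, hw]

open Polynomial in
theorem aeval_vanish (hG : G.Connected) (x : V) (r : ℕ) (h : V → ℝ)
    (hh : ∀ y, G.dist x y < r → h y = 0) (p : ℝ[X]) (hp : p.natDegree < r) :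
    aeval (PL G) p h x = 0 := by
  rw [aeval_eq_sum_range]
  simp only [LinearMap.sum_apply, Finset.sum_apply, LinearMap.smul_apply, Pi.smul_apply]
  refine Finset.sum_eq_zero fun i hi => ?_
  rw [PLpow_vanish G hG x r h hh i x, smul_zero]
  simp at hi ⊢; omega

open Polynomial in
theorem cheb_abs_le (hd : ∀ v, 0 < G.degree v) (x : V) (h : V → ℝ)
    (h0 : ∀ y, 0 ≤ h y) (h1 : ∀ y, h y ≤ 1) (m : ℤ) :
    |aeval (PL G) (Chebyshev.T ℝ m) h x| ≤ Fintype.card V := by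
  set g := aeval (PL G) (Chebyshev.T ℝ m) h with hg
  have hc := cheb_contract G hd m h
  rw [← hg] at hc
  have hh : ip G h h ≤ (Fintype.card V : ℝ) ^ 2 := by
    unfold ip
    calc ∑ v, (G.degree v : ℝ) * (h v * h v) ≤ ∑ _v : V, (Fintype.card V : ℝ) := by
          refine Finset.sum_le_sum fun v _ => ?_
          have a1 : (G.degree v : ℝ) ≤ Fintype.card V := by
            exact_mod_cast (G.degree_lt_card_verts v).le
          have a2 : h v * h v ≤ 1 := by nlinarith [h0 v, h1 v]
          have a3 : 0 ≤ h v * h v := mul_self_nonneg _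
          calc (G.degree v : ℝ) * (h v * h v) ≤ Fintype.card V * 1 := by gcongr
            _ = _ := mul_one _
      _ = _ := by simp; ring
  have hx : g x ^ 2 ≤ ip G g g := by
    unfold ip
    have hp : ∀ v, 0 ≤ (G.degree v : ℝ) * (g v * g v) := fun v =>
      mul_nonneg (by positivity) (mul_self_nonneg _)
    have := Finset.single_le_sum (f := fun v => (G.degree v : ℝ) * (g v * g v))
      (fun v _ => hp v) (Finset.mem_univ x)
    have d1 : (1 : ℝ) ≤ G.degree x := by exact_mod_cast hd x
    have := mul_self_nonneg (g x)
    nlinarith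
  exact abs_le_of_sq_le_sq (by linarith) (by positivity)

open Polynomial in
theorem cheb_tail (hG : G.Connected) (hd : ∀ v, 0 < G.degree v) (x : V) (h : V → ℝ)
    (h0 : ∀ y, 0 ≤ h y) (h1 : ∀ y, h y ≤ 1) (r : ℕ)
    (hh : ∀ y, G.dist x y < r → h y = 0) (s : ℝ) (hs : 0 ≤ s) (t : ℕ) (m : ℤ) :
    |aeval (PL G) (X ^ t * Chebyshev.T ℝ m) h x|
      ≤ Fintype.card V * Real.exp (-(s * r)) * Real.cosh s ^ t * (2 * Real.cosh (s * m)) := by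
  induction t generalizing m with
  | zero =>
    rw [pow_zero, one_mul, pow_zero, mul_one]
    by_cases hm : m.natAbs < r
    · rw [aeval_vanish G hG x r h hh _ (by rwa [Chebyshev.natDegree_T]), abs_zero]
      have := Real.cosh_pos (s * m)
      positivity
    · refine (cheb_abs_le G hd x h h0 h1 m).trans ?_
      rw [mul_assoc]
      refine le_mul_of_one_le_right (by positivity) ?_
      have hmr : (r : ℝ) ≤ |(m : ℝ)| := by
        have : r ≤ m.natAbs := by omega
        have h2 : (r : ℝ) ≤ (m.natAbs : ℝ) := by exact_mod_cast this
        rwa [Nat.cast_natAbs, Int.cast_abs] at h2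
      have hc : Real.exp (s * r) ≤ 2 * Real.cosh (s * m) := by
        rw [← Real.cosh_abs, abs_mul, abs_of_nonneg hs, Real.cosh_eq]
        have := Real.exp_pos (-(s * |(m : ℝ)|))
        have : Real.exp (s * r) ≤ Real.exp (s * |(m : ℝ)|) := by gcongr
        linarith
      calc (1 : ℝ) = Real.exp (-(s * r)) * Real.exp (s * r) := by
            rw [← Real.exp_add]; simp
        _ ≤ _ := by gcongr
  | succ t ih =>
    have h2 : (X : ℝ[X]) ^ (t + 1) * Chebyshev.T ℝ m
        = C (1/2) * (X ^ t * Chebyshev.T ℝ (m + 1) + X ^ t * Chebyshev.T ℝ (m - 1)) := by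
      rw [Chebyshev.T_add_one]
      have : (C (1/2) : ℝ[X]) * 2 = 1 := by
        rw [← C_ofNat, ← C_mul]; norm_num
      linear_combination (-(X : ℝ[X]) ^ (t + 1) * Chebyshev.T ℝ m) * this
    rw [h2, map_mul, aeval_C, map_add]
    simp only [Module.End.mul_apply, Module.algebraMap_end_apply, LinearMap.add_apply,
      Pi.smul_apply, Pi.add_apply, smul_eq_mul]
    rw [abs_mul, abs_of_pos (by norm_num : (0:ℝ) < 1/2)]
    have i1 := ih (m + 1)
    have i2 := ih (m - 1)
    have hcosh : Real.cosh (s * ((m + 1 : ℤ) : ℝ)) + Real.cosh (s * ((m - 1 : ℤ) : ℝ))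
        = 2 * Real.cosh (s * m) * Real.cosh s := by
      push_cast
      rw [mul_add, mul_sub, mul_one, Real.cosh_add, Real.cosh_sub]; ring
    calc 1 / 2 * |_ + _| ≤ 1 / 2 * (_ + _) := by
          gcongr
          exact (abs_add_le _ _).trans (add_le_add i1 i2)
      _ = 1 / 2 * (Fintype.card V * Real.exp (-(s * r)) * Real.cosh s ^ t * 2 *
          (Real.cosh (s * ((m + 1 : ℤ) : ℝ)) + Real.cosh (s * ((m - 1 : ℤ) : ℝ)))) := by ring
      _ = _ := by rw [hcosh]; ring

/-- Varopoulos-Carne type estimate. -/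
theorem walk_tail (hG : G.Connected) (hd : ∀ v, 0 < G.degree v) (x : V) (r : ℕ)
    (s : ℝ) (hs : 0 ≤ s) (t : ℕ) :
    (PL G ^ t) (fun y => if r ≤ G.dist x y then 1 else 0) x
      ≤ 2 * Fintype.card V * Real.exp (t * (s ^ 2 / 2) - s * r) := by
  have h := cheb_tail G hG hd x (fun y => if r ≤ G.dist x y then 1 else 0)
    (fun y => by positivity) (fun y => by split_ifs <;> norm_num) r
    (fun y hy => by simp [hy]) s hs t 0
  rw [Polynomial.Chebyshev.T_zero, mul_one, map_pow, Polynomial.aeval_X] at h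
  refine (le_abs_self _).trans (h.trans ?_)
  simp only [Int.cast_zero, mul_zero, Real.cosh_zero, mul_one]
  rw [sub_eq_add_neg, Real.exp_add, Real.exp_nat_mul]
  have : Real.cosh s ^ t ≤ Real.exp (s ^ 2 / 2) ^ t := by
    gcongr
    exact Real.cosh_le_exp_half_sq s
  calc (Fintype.card V : ℝ) * Real.exp (-(s * r)) * Real.cosh s ^ t * 2
      ≤ (Fintype.card V : ℝ) * Real.exp (-(s * r)) * Real.exp (s ^ 2 / 2) ^ t * 2 := by gcongr
    _ = _ := by ring

end Operator
end CopDrunk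
namespace CopDrunk

section Value
set_option linter.unusedSectionVars false
variable {V : Type} [Fintype V] (G : SimpleGraph V)

/-- cost of a cop move to the given vertex with continuation value `f` -/
noncomputable def moveCost (f : V → V → ℝ) (d r : V) : ℝ :=
  1 + if d = r then 0 else PL G (f d) r

/-- finite-horizon value of the game -/
noncomputable def val : ℕ → V → V → ℝ
  | 0, _, _ => 0
  | k + 1, c, r =>
      if c = r then 0 else
        if h : (G.neighborFinset c).Nonempty then
          (G.neighborFinset c).inf' h fun c' => moveCost G (val k) c' r
        else 0

theorem PL_nonneg {f : V → ℝ} (h : ∀ w, 0 ≤ f w) (v : V) : 0 ≤ PL G f v :=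
  Finset.sum_nonneg fun w _ => mul_nonneg (wt_nonneg G v w) (h w)

theorem moveCost_mono {f g : V → V → ℝ} (h : ∀ c r, f c r ≤ g c r) (c' r : V) :
    moveCost G f c' r ≤ moveCost G g c' r := by
  unfold moveCost
  split_ifs
  · exact le_rfl
  · have := PL_mono G (h c') r
    linarith

theorem val_nonneg (k : ℕ) (c r : V) : 0 ≤ val G k c r := by
  induction k generalizing c r with
  | zero => exact le_rfl
  | succ k ih =>
    rw [val]
    split_ifs with h1 h2
    · exact le_rfl
    · refine Finset.le_inf' _ _ fun c' _ => ?_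
      unfold moveCost
      split_ifs
      · norm_num
      · have := PL_nonneg G (ih c') r
        linarith
    · exact le_rfl

theorem val_self (k : ℕ) (c : V) : val G k c c = 0 := by
  cases k <;> simp [val]

theorem val_le_moveCost (k : ℕ) {c c' : V} (r : V) (h : G.Adj c c') :
    val G (k + 1) c r ≤ moveCost G (val G k) c' r := by
  have hm : c' ∈ G.neighborFinset c := by simpa using h
  rw [val]
  split_ifs with h1 h2
  · unfold moveCost
    split_ifs
    · norm_num
    · have := PL_nonneg G (val_nonneg G k c') r
      linarith
  · exact Finset.inf'_le _ hm
  · exact absurd ⟨c', hm⟩ h2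

theorem val_step (k : ℕ) {c c' : V} (r : V) (h : G.Adj c c') :
    val G (k + 1) c r ≤ 1 + PL G (val G k c') r := by
  refine (val_le_moveCost G k r h).trans ?_
  unfold moveCost
  split_ifs
  · have := PL_nonneg G (val_nonneg G k c') r
    linarith
  · exact le_rfl

theorem val_mono_succ (hd : ∀ v, 0 < G.degree v) (k : ℕ) (c r : V) :
    val G k c r ≤ val G (k + 1) c r := by
  induction k generalizing c r with
  | zero => exact val_nonneg G 1 c r
  | succ k ih =>
    by_cases h1 : c = r
    · subst h1; simp [val_self]
    have h2 : (G.neighborFinset c).Nonempty := by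
      rw [← Finset.card_pos, SimpleGraph.card_neighborFinset_eq_degree]; exact hd c
    rw [val, val, if_neg h1, if_neg h1, dif_pos h2, dif_pos h2]
    refine Finset.le_inf' _ _ fun c' hc' => ?_
    exact (Finset.inf'_le _ hc').trans (moveCost_mono G ih c' r)

theorem val_mono (hd : ∀ v, 0 < G.degree v) (c r : V) : Monotone fun k => val G k c r :=
  monotone_nat_of_le_succ fun k => val_mono_succ G hd k c r

theorem exists_closer (hG : G.Connected) {c x : V} (h : 0 < G.dist c x) :
    ∃ c', G.Adj c c' ∧ G.dist c' x + 1 = G.dist c x := by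
  obtain ⟨p, hp⟩ := hG.exists_walk_length_eq_dist c x
  cases p with
  | nil => simp at h
  | @cons _ c' _ hadj q =>
    refine ⟨c', hadj, ?_⟩
    have h1 := SimpleGraph.dist_le q
    have h2 := hG.dist_triangle (u := c) (v := c') (w := x)
    have h3 : G.dist c c' = 1 := SimpleGraph.dist_eq_one_iff_adj.2 hadj
    simp at hp
    omega

/-- chase the target `x` for `t` steps -/
theorem val_chase (hG : G.Connected) (hd : ∀ v, 0 < G.degree v) (x : V) (t : ℕ) (c : V)
    (ht : t ≤ G.dist c x) :
    ∃ c', G.dist c' x + t = G.dist c x ∧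
      ∀ k r, val G (k + t) c r ≤ t + (PL G ^ t) (val G k c') r := by
  induction t generalizing c with
  | zero => exact ⟨c, rfl, fun k r => by simp⟩
  | succ t ih =>
    obtain ⟨c1, hadj, h1⟩ := exists_closer G hG (c := c) (x := x) (by omega)
    obtain ⟨c', h2, h3⟩ := ih c1 (by omega)
    refine ⟨c', by omega, fun k r => ?_⟩
    refine (val_step G (k + t) r hadj).trans ?_
    have h4 := PL_mono G (f := val G (k + t) c1)
      (g := (fun _ => (t : ℝ)) + (PL G ^ t) (val G k c')) (fun w => h3 k w) r
    rw [map_add, PL_const G hd, Pi.add_apply] at h4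
    rw [pow_succ', Module.End.mul_apply]
    push_cast
    linarith

theorem exists_dist (hG : G.Connected) (u v : V) (i : ℕ) (hi : i ≤ G.dist u v) :
    ∃ w, G.dist w v = i := by
  have : ∀ t, t ≤ G.dist u v → ∃ w, G.dist w v + t = G.dist u v := by
    intro t ht
    induction t with
    | zero => exact ⟨u, rfl⟩
    | succ t ih =>
      obtain ⟨w, hw⟩ := ih (by omega)
      obtain ⟨w', -, h⟩ := exists_closer G hG (c := w) (x := v) (by omega)
      exact ⟨w', by omega⟩
  obtain ⟨w, hw⟩ := this (G.dist u v - i) (by omega)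
  exact ⟨w, by omega⟩

theorem dist_add_degree (hG : G.Connected) (u v x : V) :
    G.dist u v + G.degree x ≤ Fintype.card V + 2 := by
  have h1 : (Finset.range (G.dist u v + 1)) \
      {G.dist x v - 1, G.dist x v, G.dist x v + 1} ⊆
      ((G.neighborFinset x)ᶜ).image fun w => G.dist w v := by
    intro i hi
    simp only [Finset.mem_sdiff, Finset.mem_range, Finset.mem_insert, Finset.mem_singleton,
      not_or] at hi
    obtain ⟨w, hw⟩ := exists_dist G hG u v i (by omega)
    refine Finset.mem_image.2 ⟨w, ?_, hw⟩
    rw [Finset.mem_compl, SimpleGraph.mem_neighborFinset]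
    intro hadj
    have h3 : G.dist x w = 1 := SimpleGraph.dist_eq_one_iff_adj.2 hadj
    have h4 : G.dist w x = 1 := SimpleGraph.dist_eq_one_iff_adj.2 hadj.symm
    have := hG.dist_triangle (u := x) (v := w) (w := v)
    have := hG.dist_triangle (u := w) (v := x) (w := v)
    omega
  have h2 := (Finset.card_le_card h1).trans Finset.card_image_le
  have h3 := Finset.le_card_sdiff {G.dist x v - 1, G.dist x v, G.dist x v + 1}
    (Finset.range (G.dist u v + 1))
  have h4 := Finset.card_le_three (a := G.dist x v - 1) (b := G.dist x v) (c := G.dist x v + 1)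
  rw [Finset.card_compl, SimpleGraph.card_neighborFinset_eq_degree] at h2
  rw [Finset.card_range] at h3
  have := G.degree_lt_card_verts x
  omega

/-- From distance at most two, the value is at most the maximal degree. -/
theorem val_le_two (hG : G.Connected) (hd : ∀ v, 0 < G.degree v) (Δ : ℕ)
    (hΔ : ∀ v, G.degree v ≤ Δ) (k : ℕ) (c r : V) (h : G.dist c r ≤ 2) :
    val G k c r ≤ Δ := by
  induction k generalizing c r with
  | zero => simp [val]
  | succ k ih =>
    have hΔ1 : (1 : ℝ) ≤ Δ := by exact_mod_cast (hd c).trans_le (hΔ c)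
    by_cases h0 : c = r
    · subst h0; simp [val_self]
    obtain ⟨c', hadj, h1⟩ := exists_closer G hG (hG.pos_dist_of_ne h0)
    by_cases h2 : c' = r
    · refine (val_le_moveCost G k r hadj).trans ?_
      simpa [moveCost, h2] using hΔ1
    · have h3 : G.dist c' r = 1 := by
        have := hG.pos_dist_of_ne h2
        omega
      have h4 : G.Adj r c' := (SimpleGraph.dist_eq_one_iff_adj.1 h3).symm
      refine (val_step G k r hadj).trans ?_
      have h5 : PL G (val G k c') r ≤ PL G (fun w => Δ + -Δ * if w = c' then 1 else 0) r := by
        refine PL_mono' G r fun w hw => ?_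
        by_cases hwc : w = c'
        · subst hwc; simp [val_self]
        · simp only [hwc, if_false, mul_zero, add_zero]
          refine ih c' w ?_
          have := hG.dist_triangle (u := c') (v := r) (w := w)
          have : G.dist r w = 1 := SimpleGraph.dist_eq_one_iff_adj.2 hw
          omega
      have h6 : PL G (fun w => (Δ : ℝ) + -Δ * if w = c' then 1 else 0) r
          = Δ - Δ * (G.degree r : ℝ)⁻¹ := by
        have : (fun w => (Δ : ℝ) + -Δ * if w = c' then 1 else 0)
          = (fun _ => (Δ : ℝ)) + (-Δ : ℝ) • fun w => if w = c' then 1 else 0 := by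
          funext w; by_cases hw : w = c' <;> simp [hw]
        rw [this, map_add, map_smul, PL_const G hd]
        simp [PL_apply, wt, h4]
        ring
      have h7 : (1 : ℝ) ≤ Δ * (G.degree r : ℝ)⁻¹ := by
        have : (0 : ℝ) < G.degree r := by exact_mod_cast hd r
        rw [← div_eq_mul_inv, le_div_iff₀ this, one_mul]
        exact_mod_cast hΔ r
      linarith

end Value
end CopDrunk
namespace CopDrunk

section Level
set_option linter.unusedSectionVars false
variable {V : Type} [Fintype V] (G : SimpleGraph V)

/-- 0/1 adjacency weights -/
noncomputable def av (v w : V) : ℝ := if G.Adj v w then 1 else 0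

theorem av_nonneg (v w : V) : 0 ≤ av G v w := by unfold av; positivity

theorem av_comm (v w : V) : av G v w = av G w v := by
  unfold av; simp only [G.adj_comm]

theorem sum_av (v : V) : ∑ w, av G v w = G.degree v := by
  unfold av
  rw [← Finset.sum_filter, ← SimpleGraph.neighborFinset_eq_filter]
  simp

theorem PL_eq_av (f : V → ℝ) (v : V) :
    PL G f v = (G.degree v : ℝ)⁻¹ * ∑ w, av G v w * f w := by
  rw [PL_apply, Finset.mul_sum]
  refine Finset.sum_congr rfl fun w _ => ?_
  unfold wt av; split_ifs <;> simp

theorem PL_ge_av (hd : ∀ v, 0 < G.degree v) {f : V → ℝ} (hf : ∀ w, 0 ≤ f w) (v : V) :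
    (Fintype.card V : ℝ)⁻¹ * ∑ w, av G v w * f w ≤ PL G f v := by
  rw [PL_eq_av]
  have h1 : (G.degree v : ℝ) ≤ Fintype.card V := by
    exact_mod_cast (G.degree_lt_card_verts v).le
  have h2 : (0 : ℝ) < G.degree v := by exact_mod_cast hd v
  have h3 : 0 ≤ ∑ w, av G v w * f w :=
    Finset.sum_nonneg fun w _ => mul_nonneg (av_nonneg G v w) (hf w)
  gcongr

theorem p3_ge1 (hd : ∀ v, 0 < G.degree v) (x : V) :
    (G.degree x : ℝ) / (∑ y, av G x y * G.degree y) ≤ (PL G ^ 3) (av G x) x := by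
  have ha : (0 : ℝ) < G.degree x := by exact_mod_cast hd x
  have h1 : ∀ w, (if w = x then (1:ℝ) else 0) ≤ PL G (av G x) w := by
    intro w
    split_ifs with hw
    · subst hw
      rw [PL_eq_av]
      have : ∑ y, av G w y * av G w y = G.degree w := by
        rw [← sum_av]
        refine Finset.sum_congr rfl fun y _ => ?_
        unfold av; split_ifs <;> simp
      rw [this, inv_mul_cancel₀ ha.ne']
    · exact PL_nonneg G (av_nonneg G x) w
  have h2 : (PL G ^ 2) (fun w => if w = x then (1:ℝ) else 0) x ≤ (PL G ^ 3) (av G x) x := by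
    rw [pow_succ (PL G) 2, Module.End.mul_apply]
    exact PLpow_mono G 2 h1 x
  refine le_trans ?_ h2
  rw [pow_two, Module.End.mul_apply, PL_eq_avg]
  have h3 : ∀ y ∈ G.neighborFinset x,
      PL G (fun w => if w = x then (1:ℝ) else 0) y = 1 ^ 2 / (G.degree y : ℝ) := by
    intro y hy
    have : G.Adj y x := by simpa using (G.mem_neighborFinset x y).1 hy |>.symm
    simp [PL_apply, wt, this]
  rw [Finset.sum_congr rfl h3]
  have h4 := Finset.sq_sum_div_le_sum_sq_div (G.neighborFinset x) (fun _ => (1:ℝ))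
    (g := fun y => (G.degree y : ℝ)) (fun y _ => by exact_mod_cast hd y)
  have h5 : ∑ y, av G x y * (G.degree y : ℝ) = ∑ y ∈ G.neighborFinset x, (G.degree y : ℝ) := by
    rw [SimpleGraph.neighborFinset_eq_filter, Finset.sum_filter]
    refine Finset.sum_congr rfl fun y _ => ?_
    unfold av; split_ifs <;> simp
  rw [h5]
  simp only [Finset.sum_const, SimpleGraph.card_neighborFinset_eq_degree, nsmul_eq_mul,
    mul_one] at h4
  calc (G.degree x : ℝ) / ∑ y ∈ G.neighborFinset x, (G.degree y : ℝ)
      = (G.degree x : ℝ)⁻¹ * ((G.degree x : ℝ) ^ 2 / ∑ y ∈ G.neighborFinset x, (G.degree y : ℝ)) := by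
        field_simp
    _ ≤ _ := by gcongr

theorem p3_ge2 (hd : ∀ v, 0 < G.degree v) (x : V) :
    (∑ y, av G x y * G.degree y) ^ 2 / (G.degree x * (Fintype.card V : ℝ) ^ 3)
      ≤ (PL G ^ 3) (av G x) x := by
  have ha : (0 : ℝ) < G.degree x := by exact_mod_cast hd x
  have : Nonempty V := ⟨x⟩
  have hn : (0 : ℝ) < Fintype.card V := by exact_mod_cast Fintype.card_pos
  set n : ℝ := (Fintype.card V : ℝ) with hnn
  set m : V → ℝ := fun z => ∑ w, av G z w * av G x w with hm
  have hm0 : ∀ z, 0 ≤ m z := fun z =>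
    Finset.sum_nonneg fun w _ => mul_nonneg (av_nonneg _ _ _) (av_nonneg _ _ _)
  have h1 : ∀ z, n⁻¹ * m z ≤ PL G (av G x) z := fun z => PL_ge_av G hd (av_nonneg G x) z
  have h2 : ∀ y, n⁻¹ * (n⁻¹ * ∑ z, av G y z * m z) ≤ PL G (PL G (av G x)) y := by
    intro y
    refine le_trans ?_ (PL_ge_av G hd (fun z => PL_nonneg G (av_nonneg G x) z) y)
    rw [← hnn, Finset.mul_sum]
    refine mul_le_mul_of_nonneg_left (Finset.sum_le_sum fun z _ => ?_) (by positivity)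
    have := mul_le_mul_of_nonneg_left (h1 z) (av_nonneg G y z)
    linarith
  have h3 : (G.degree x : ℝ)⁻¹ * (n⁻¹ * (n⁻¹ * ∑ y, av G x y * ∑ z, av G y z * m z))
      ≤ (PL G ^ 3) (av G x) x := by
    have e : (PL G ^ 3) (av G x) x = PL G (PL G (PL G (av G x))) x := rfl
    rw [e, PL_eq_av G _ x]
    rw [Finset.mul_sum, Finset.mul_sum]
    refine mul_le_mul_of_nonneg_left (Finset.sum_le_sum fun y _ => ?_) (by positivity)
    have := mul_le_mul_of_nonneg_left (h2 y) (av_nonneg G x y)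
    linarith
  have h4 : ∑ y, av G x y * ∑ z, av G y z * m z = ∑ z, m z ^ 2 := by
    simp_rw [Finset.mul_sum]
    rw [Finset.sum_comm]
    refine Finset.sum_congr rfl fun z _ => ?_
    rw [pow_two]
    conv_rhs => rw [hm]
    simp only []
    rw [Finset.sum_mul]
    refine Finset.sum_congr rfl fun y _ => ?_
    rw [av_comm G y z]; ring
  have h5 : ∑ y, av G x y * (G.degree y : ℝ) = ∑ z, m z := by
    rw [hm, Finset.sum_comm]
    refine Finset.sum_congr rfl fun y _ => ?_
    rw [← sum_av, Finset.mul_sum]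
    refine Finset.sum_congr rfl fun z _ => ?_
    rw [av_comm G y z]; ring
  have h6 := sq_sum_le_card_mul_sum_sq (s := Finset.univ) (f := m)
  rw [Finset.card_univ, ← hnn] at h6
  refine le_trans ?_ h3
  rw [h4, h5]
  calc (∑ z, m z) ^ 2 / (G.degree x * n ^ 3) ≤ (n * ∑ z, m z ^ 2) / (G.degree x * n ^ 3) := by
        gcongr
    _ = _ := by field_simp

theorem p3_ge (hd : ∀ v, 0 < G.degree v) (x : V) (K : ℝ) (hK0 : 0 < K)
    (hK : (Fintype.card V : ℝ) ^ 3 ≤ K ^ 4)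
    (hx : K < G.degree x) : K⁻¹ ≤ (PL G ^ 3) (av G x) x := by
  by_contra hlt
  push Not at hlt
  have ha : (0 : ℝ) < G.degree x := by exact_mod_cast hd x
  have : Nonempty V := ⟨x⟩
  have hn : (0 : ℝ) < Fintype.card V := by exact_mod_cast Fintype.card_pos
  have h1 := (p3_ge1 G hd x).trans_lt hlt
  have h2 := (p3_ge2 G hd x).trans_lt hlt
  set n : ℝ := (Fintype.card V : ℝ)
  set a : ℝ := (G.degree x : ℝ)
  set S := ∑ y, av G x y * (G.degree y : ℝ)
  have hS : 0 < S := by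
    have h0 : 0 ≤ S := Finset.sum_nonneg fun y _ => mul_nonneg (av_nonneg _ _ _) (by positivity)
    refine lt_of_le_of_ne h0 fun h => ?_
    have e : ∀ y ∈ Finset.univ, av G x y * (G.degree y : ℝ) = 0 :=
      (Finset.sum_eq_zero_iff_of_nonneg fun y _ =>
        mul_nonneg (av_nonneg _ _ _) (by positivity)).1 h.symm
    have : ∑ y, av G x y = 0 := Finset.sum_eq_zero fun y hy => by
      have h1 : (G.degree y : ℝ) ≠ 0 := by exact_mod_cast (hd y).ne'
      exact (mul_eq_zero.1 (e y hy)).resolve_right h1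
    rw [sum_av] at this
    exact ha.ne' this
  rw [div_lt_iff₀ hS, inv_mul_eq_div, lt_div_iff₀ hK0] at h1
  rw [div_lt_iff₀ (by positivity), inv_mul_eq_div, lt_div_iff₀ hK0] at h2
  have h3 : (a * K) ^ 2 < S ^ 2 := by gcongr
  have h4 : (a * K) ^ 2 * K < a * n ^ 3 := by nlinarith
  have h5 : a * K ^ 3 < n ^ 3 := by
    have : a * (a * K ^ 3) < a * n ^ 3 := by linarith [h4, (by ring : (a * K) ^ 2 * K = a * (a * K ^ 3))]
    exact lt_of_mul_lt_mul_left this ha.le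
  have h6 : K ^ 4 < a * K ^ 3 := by
    have : K * K ^ 3 < a * K ^ 3 := by gcongr
    linarith [(by ring : K ^ 4 = K * K ^ 3)]
  linarith

/-- If `f ≤ M - δ·1_A` on the `t`-ball then `P^t f ≤ M - δ P^t 1_A`. -/
theorem PLpow_mix (hG : G.Connected) (hd : ∀ v, 0 < G.degree v) (t : ℕ) (x : V)
    (f g : V → ℝ) (M δ : ℝ) (h : ∀ w, G.dist x w ≤ t → f w ≤ M + δ * g w) :
    (PL G ^ t) f x ≤ M + δ * (PL G ^ t) g x := by
  have h1 := PLpow_mono_dist G hG t (f := f) (g := (fun _ => M) + δ • g) x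
    (fun w hw => by simpa using h w hw)
  rw [map_add, map_smul, PLpow_const G hd] at h1
  simpa using h1

theorem level_step (hG : G.Connected) (hd : ∀ v, 0 < G.degree v) (K : ℝ) (hK0 : 0 < K)
    (hK : (Fintype.card V : ℝ) ^ 3 ≤ K ^ 4) (d : ℕ) (hd3 : 2 ≤ d) (B : ℝ) (hB : 0 ≤ B)
    (hlow : ∀ k c r, G.dist c r ≤ d → val G k c r ≤ B) (k : ℕ) (c r : V)
    (h : G.dist c r ≤ d + 1) : val G k c r ≤ B + 3 * K := by
  induction k generalizing c r with
  | zero => simp only [val]; positivity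
  | succ k ih =>
    by_cases hle : G.dist c r ≤ d
    · exact (hlow _ c r hle).trans (by linarith)
    have hdist : G.dist c r = d + 1 := by omega
    by_cases hdeg : (G.degree r : ℝ) ≤ K
    · obtain ⟨c', hadj, h1⟩ := exists_closer G hG (c := c) (x := r) (by omega)
      obtain ⟨y, hy, h2⟩ := exists_closer G hG (c := r) (x := c')
        (by rw [SimpleGraph.dist_comm]; omega)
      rw [SimpleGraph.dist_comm (u := r)] at h2
      refine (val_step G k r hadj).trans ?_
      have h3 := PLpow_mix G hG hd 1 r (val G k c') (fun w => if w = y then 1 else 0)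
        (B + 3 * K) (-(3 * K)) (by
          intro w hw
          by_cases hwy : w = y
          · subst hwy
            have := hlow k c' w (by rw [SimpleGraph.dist_comm]; omega)
            simp only [if_true]; linarith
          · simp only [hwy, if_false, mul_zero, add_zero]
            refine ih c' w ?_
            have := hG.dist_triangle (u := c') (v := r) (w := w)
            omega)
      rw [pow_one] at h3
      have h4 : PL G (fun w => if w = y then (1:ℝ) else 0) r = (G.degree r : ℝ)⁻¹ := by
        simp [PL_apply, wt, hy]
      rw [h4] at h3
      have h5 : 1 ≤ K * (G.degree r : ℝ)⁻¹ := by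
        have : (0 : ℝ) < G.degree r := by exact_mod_cast hd r
        rwa [← div_eq_mul_inv, le_div_iff₀ this, one_mul]
      linarith
    · push Not at hdeg
      have hp := p3_ge G hd r K hK0 hK hdeg
      obtain ⟨c', h1, h2⟩ := val_chase G hG hd r 3 c (by omega)
      have h3 := h2 k r
      have h4 : val G (k + 1) c r ≤ val G (k + 3) c r := val_mono G hd c r (by omega)
      have h5 := PLpow_mix G hG hd 3 r (val G k c') (av G r) (B + 3 * K) (-(3 * K)) (by
          intro w hw
          have htri := hG.dist_triangle (u := c') (v := r) (w := w)
          unfold av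
          split_ifs with hrw
          · have : G.dist r w = 1 := SimpleGraph.dist_eq_one_iff_adj.2 hrw
            have := hlow k c' w (by omega)
            linarith
          · have := ih c' w (by omega)
            linarith)
      have h6 : 1 ≤ K * (PL G ^ 3) (av G r) r := by
        rwa [inv_le_iff_one_le_mul₀' hK0] at hp
      push_cast at h3
      linarith

theorem level_bound (hG : G.Connected) (hd : ∀ v, 0 < G.degree v) (K : ℝ) (hK0 : 0 < K)
    (hK : (Fintype.card V : ℝ) ^ 3 ≤ K ^ 4) (Δ : ℕ) (hΔ : ∀ v, G.degree v ≤ Δ)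
    (d : ℕ) (k : ℕ) (c r : V) (h : G.dist c r ≤ d) : val G k c r ≤ Δ + 3 * K * d := by
  induction d generalizing k c r with
  | zero =>
    have := val_le_two G hG hd Δ hΔ k c r (by omega)
    simpa using this
  | succ d ih =>
    by_cases hd2 : d < 2
    · have := val_le_two G hG hd Δ hΔ k c r (by omega)
      have : 0 ≤ 3 * K * ((d + 1 : ℕ) : ℝ) := by positivity
      linarith
    · have := level_step G hG hd K hK0 hK d (by omega) (Δ + 3 * K * d) (by positivity) ih k c r h
      push_cast
      linarith

/-- long-range chase -/
theorem long_step (hG : G.Connected) (hd : ∀ v, 0 < G.degree v) (M B s : ℝ) (hs : 0 ≤ s)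
    (hM0 : 0 ≤ M) (hB : 0 ≤ B) (ρ : ℕ)
    (hM : ∀ k c r, val G k c r ≤ M) (c r : V)
    (hlow : ∀ k c' r', G.dist c' r' < ρ → val G k c' r' ≤ B) (k : ℕ) :
    val G k c r ≤ G.dist c r + B +
      M * (2 * Fintype.card V * Real.exp (G.dist c r * (s ^ 2 / 2) - s * ρ)) := by
  obtain ⟨c', h1, h2⟩ := val_chase G hG hd r (G.dist c r) c le_rfl
  have hc : c' = r := hG.dist_eq_zero_iff.1 (by omega)
  subst hc
  refine (val_mono G hd c c' (Nat.le_add_right k (G.dist c c'))).trans ((h2 k c').trans ?_)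
  have h3 := PLpow_mix G hG hd (G.dist c c') c' (val G k c')
    (fun y => if ρ ≤ G.dist c' y then 1 else 0) B M (by
      intro w _
      split_ifs with hw
      · have := hM k c' w
        linarith
      · have := hlow k c' w (by omega)
        linarith)
  have h4 := mul_le_mul_of_nonneg_left
    (walk_tail G hG hd c' ρ s hs (G.dist c c')) hM0
  linarith

end Level
end CopDrunk
namespace CopDrunk

section Numeric

/-- Uniform bound on the finite-horizon values. -/
theorem val_bound_aux {V : Type} [Fintype V] (G : SimpleGraph V) (hG : G.Connected)
    (hd : ∀ v, 0 < G.degree v) (e y : ℝ) (he : 0 < e) (he1 : e ≤ 1) (hy1 : 1 ≤ y)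
    (hy8 : y ^ 8 = Fintype.card V) (hye : 18 ≤ e * y)
    (hexp : 14 * y ^ 24 * Real.exp (-((e / 8) ^ 2 * y / 2)) ≤ 1) (k : ℕ) (u v : V) :
    val G k u v ≤ (1 + e) * Fintype.card V := by
  have : Nonempty V := ⟨u⟩
  obtain ⟨x, hx⟩ := G.exists_maximal_degree_vertex
  set Δ : ℕ := G.maxDegree with hΔdef
  have hΔ : ∀ v, G.degree v ≤ Δ := fun v => G.degree_le_maxDegree v
  set n : ℝ := (Fintype.card V : ℝ) with hn
  have hn1 : 1 ≤ n := by rw [← hy8]; exact one_le_pow₀ hy1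
  have hDΔ : ∀ c r : V, (G.dist c r : ℝ) + Δ ≤ n + 2 := by
    intro c r
    have := dist_add_degree G hG c r x
    rw [← hx] at this
    rw [hn]; exact_mod_cast this
  have hΔ1 : (1 : ℝ) ≤ Δ := by exact_mod_cast (hd u).trans_le (hΔ u)
  have hΔn : (Δ : ℝ) ≤ n := by
    rw [hx, hn]; exact_mod_cast (G.degree_lt_card_verts x).le
  have hDn : ∀ c r : V, (G.dist c r : ℝ) ≤ 2 * n := fun c r => by
    have := hDΔ c r
    linarith
  set K : ℝ := y ^ 6 with hKdef
  have hK0 : 0 < K := by positivity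
  have hKn : K ≤ n := by
    rw [← hy8]; exact pow_le_pow_right₀ hy1 (by norm_num)
  have hK : (Fintype.card V : ℝ) ^ 3 ≤ K ^ 4 := by
    rw [← hn, ← hy8, hKdef]; apply le_of_eq; ring
  have hlev := level_bound G hG hd K hK0 hK Δ hΔ
  have hM : ∀ k c r, val G k c r ≤ 7 * n ^ 2 := by
    intro k c r
    refine (hlev _ k c r le_rfl).trans ?_
    have h1 : 3 * K * (G.dist c r : ℝ) ≤ 3 * n * (2 * n) := by
      gcongr
      exact hDn c r
    nlinarith
  set d0 : ℕ := ⌈y⌉₊ with hd0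
  have hd0y : y ≤ d0 := Nat.le_ceil y
  have hd0y2 : (d0 : ℝ) ≤ 2 * y := by
    have := Nat.ceil_lt_add_one (by linarith : 0 ≤ y)
    rw [← hd0] at this
    linarith
  set B0 : ℝ := Δ + 3 * K * d0 with hB0
  have hB0' : 0 ≤ B0 := by positivity
  have claim : ∀ d : ℕ, ∀ k c r, G.dist c r = d → val G k c r ≤ B0 + (1 + e / 2) * d := by
    intro d
    induction d using Nat.strong_induction_on with
    | _ d ih =>
      intro k c r hcr
      by_cases hdd : d ≤ d0
      · have h1 := hlev d0 k c r (by omega)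
        have : 0 ≤ (1 + e / 2) * (d : ℝ) := by positivity
        linarith
      · push Not at hdd
        have hdy : y ≤ d := hd0y.trans (by exact_mod_cast hdd.le)
        set ρ : ℕ := ⌈e / 8 * d⌉₊ with hρ
        have hρ1 : e / 8 * d ≤ ρ := Nat.le_ceil _
        have hlow : ∀ k c' r', G.dist c' r' < ρ →
            val G k c' r' ≤ B0 + (1 + e / 2) * (e / 8 * d) := by
          intro k c' r' h
          have h1 : (G.dist c' r' : ℝ) < e / 8 * d := Nat.lt_ceil.1 h
          have h2 : (G.dist c' r' : ℝ) < d := by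
            have : e / 8 * (d : ℝ) ≤ 1 * d := by gcongr; linarith
            linarith
          refine (ih _ (by exact_mod_cast h2) k c' r' rfl).trans ?_
          gcongr
        have h3 := long_step G hG hd (7 * n ^ 2) (B0 + (1 + e / 2) * (e / 8 * d)) (e / 8)
          (by positivity) (by positivity) (by positivity) ρ hM c r hlow k
        rw [hcr, ← hn] at h3
        have h4 : Real.exp ((d : ℝ) * ((e / 8) ^ 2 / 2) - e / 8 * ρ)
            ≤ Real.exp (-((e / 8) ^ 2 * y / 2)) := by
          apply Real.exp_le_exp.2
          have h5 : e / 8 * (e / 8 * d) ≤ e / 8 * ρ := by gcongr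
          have h6 : (e / 8) ^ 2 * y ≤ (e / 8) ^ 2 * d := by gcongr
          nlinarith
        have h5 : 7 * n ^ 2 * (2 * n * Real.exp ((d : ℝ) * ((e / 8) ^ 2 / 2) - e / 8 * ρ)) ≤ 1 := by
          refine le_trans ?_ hexp
          calc _ = 14 * n ^ 3 * Real.exp ((d : ℝ) * ((e / 8) ^ 2 / 2) - e / 8 * ρ) := by ring
            _ ≤ 14 * n ^ 3 * Real.exp (-((e / 8) ^ 2 * y / 2)) := by gcongr
            _ = _ := by rw [← hy8]; ring
        have h6 : 18 ≤ e * d := hye.trans (by gcongr)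
        nlinarith
  refine (claim _ k u v rfl).trans ?_
  have h1 := hDΔ u v
  have h2 : K * d0 ≤ y ^ 6 * (2 * y) := by rw [hKdef]; gcongr
  have h3 : 1 ≤ y ^ 7 := one_le_pow₀ hy1
  have h4 : 18 * y ^ 7 ≤ e * n := by
    rw [← hy8]
    calc 18 * y ^ 7 ≤ (e * y) * y ^ 7 := by gcongr
      _ = _ := by ring
  have h5 : (1 + e / 2) * ((G.dist u v : ℝ) + Δ) ≤ (1 + e / 2) * (n + 2) := by gcongr
  have h6 : 0 ≤ e / 2 * (Δ : ℝ) := by positivity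
  have h7 : y ^ 6 * (2 * y) = 2 * y ^ 7 := by ring
  rw [hB0]
  nlinarith

theorem val_bound (ε : ℝ) (hε : 0 < ε) : ∃ N : ℕ, 2 ≤ N ∧ ∀ (V : Type) [Fintype V],
    ∀ G : SimpleGraph V, N ≤ Fintype.card V → G.Connected → (∀ v, 0 < G.degree v) →
    ∀ k u v, val G k u v ≤ (1 + ε) * Fintype.card V := by
  set e := min ε 1 with hedef
  have he : 0 < e := lt_min hε one_pos
  have he1 : e ≤ 1 := min_le_right _ _
  set β : ℝ := (e / 8) ^ 2 / 2 with hβ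
  have hβ0 : 0 < β := by positivity
  set Y : ℝ := 14 * (Nat.factorial 25 : ℝ) / β ^ 25 + 18 / e + 1 with hY
  have ht1 : 0 < 14 * (Nat.factorial 25 : ℝ) / β ^ 25 := by positivity
  have ht2 : 0 < 18 / e := by positivity
  refine ⟨⌈Y ^ 8⌉₊ + 2, by omega, ?_⟩
  intro V _ G hN hG hd k u v
  have hn : Y ^ 8 ≤ (Fintype.card V : ℝ) := by
    refine (Nat.le_ceil _).trans ?_
    exact_mod_cast (by omega : ⌈Y ^ 8⌉₊ ≤ Fintype.card V)
  set y : ℝ := (Fintype.card V : ℝ) ^ (1 / 8 : ℝ) with hy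
  have hy0 : 0 ≤ y := by positivity
  have hy8 : y ^ 8 = Fintype.card V := by
    rw [hy, ← Real.rpow_natCast, ← Real.rpow_mul (by positivity)]
    norm_num
  have hYy : Y ≤ y := by
    rw [← hy8] at hn
    exact le_of_pow_le_pow_left₀ (by norm_num) hy0 hn
  have hy1 : 1 ≤ y := by linarith
  have hye : 18 ≤ e * y := by
    have : 18 / e ≤ y := by linarith
    rw [div_le_iff₀ he] at this
    linarith
  have hexp : 14 * y ^ 24 * Real.exp (-((e / 8) ^ 2 * y / 2)) ≤ 1 := by
    have h1 : (e / 8) ^ 2 * y / 2 = β * y := by rw [hβ]; ring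
    rw [h1, Real.exp_neg, ← div_eq_mul_inv, div_le_one (Real.exp_pos _)]
    have h2 := Real.pow_div_factorial_le_exp (β * y) (by positivity) 25
    refine le_trans ?_ h2
    have h3 : 14 * (Nat.factorial 25 : ℝ) / β ^ 25 ≤ y := by linarith
    rw [div_le_iff₀ (by positivity)] at h3
    rw [le_div_iff₀ (by positivity)]
    calc 14 * y ^ 24 * (Nat.factorial 25 : ℝ) = 14 * (Nat.factorial 25 : ℝ) * y ^ 24 := by ring
      _ ≤ y * β ^ 25 * y ^ 24 := by gcongr
      _ = _ := by ring
  refine (val_bound_aux G hG hd e y he he1 hy1 hy8 hye hexp k u v).trans ?_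
  gcongr
  exact min_le_left _ _

end Numeric

section Policy
variable {V : Type} [Fintype V] (G : SimpleGraph V)

theorem exists_policy (hd : ∀ v, 0 < G.degree v) (B : ℝ) (hB : ∀ k c r, val G k c r ≤ B) :
    ∃ (g : V → V → ℝ) (φ : V → V → V), (∀ c r, 0 ≤ g c r) ∧ (∀ c r, g c r ≤ B) ∧
      (∀ c r, G.Adj c (φ c r)) ∧ ∀ c r, c ≠ r → moveCost G g (φ c r) r ≤ g c r := by
  set g : V → V → ℝ := fun c r => ⨆ k, val G k c r with hg
  have hbdd : ∀ c r, BddAbove (Set.range fun k => val G k c r) := fun c r =>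
    ⟨B, by rintro _ ⟨k, rfl⟩; exact hB k c r⟩
  have htend : ∀ c r, Filter.Tendsto (fun k => val G k c r) Filter.atTop (nhds (g c r)) :=
    fun c r => tendsto_atTop_ciSup (val_mono G hd c r) (hbdd c r)
  have hle : ∀ k c r, val G k c r ≤ g c r := fun k c r => le_ciSup (hbdd c r) k
  have hne : ∀ c, (G.neighborFinset c).Nonempty := fun c => by
    rw [← Finset.card_pos, SimpleGraph.card_neighborFinset_eq_degree]; exact hd c
  have key : ∀ c r, ∃ c', G.Adj c c' ∧ (c ≠ r → moveCost G g c' r ≤ g c r) := by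
    intro c r
    by_cases hcr : c = r
    · obtain ⟨c', hc'⟩ := hne c
      exact ⟨c', by simpa using hc', fun h => absurd hcr h⟩
    have h1 : ∀ k, ∃ c', G.Adj c c' ∧ val G (k + 1) c r = moveCost G (val G k) c' r := by
      intro k
      obtain ⟨c', hc', h⟩ := Finset.exists_mem_eq_inf' (hne c) fun c' => moveCost G (val G k) c' r
      refine ⟨c', by simpa using hc', ?_⟩
      rw [val, if_neg hcr, dif_pos (hne c)]
      exact h
    choose f hf1 hf2 using h1
    obtain ⟨c', hc'⟩ := Finite.exists_infinite_fiber f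
    have hinf : (f ⁻¹' {c'}).Infinite := Set.infinite_coe_iff.1 hc'
    have hadj : G.Adj c c' := by
      obtain ⟨j, hj⟩ := hinf.nonempty
      have hj : f j = c' := hj
      rw [← hj]; exact hf1 j
    refine ⟨c', hadj, fun _ => ?_⟩
    have h2 : ∀ k, moveCost G (val G k) c' r ≤ g c r := by
      intro k
      obtain ⟨j, hj, hkj⟩ := hinf.exists_gt k
      have hj : f j = c' := hj
      refine (moveCost_mono G (fun c r => val_mono G hd c r hkj.le) c' r).trans ?_
      have := hf2 j
      rw [hj] at this
      rw [← this]
      exact hle _ c r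
    refine le_of_tendsto' (x := Filter.atTop) ?_ h2
    unfold moveCost
    refine Filter.Tendsto.const_add _ ?_
    split_ifs
    · exact tendsto_const_nhds
    · simp only [PL_apply]
      exact tendsto_finsetSum _ fun w _ => (htend c' w).const_mul _
  choose φ h1 h2 using key
  exact ⟨g, φ, fun c r => (val_nonneg G 0 c r).trans (hle 0 c r),
    fun c r => ciSup_le fun k => hB k c r, h1, h2⟩

end Policy
end CopDrunk
namespace CopDrunk

section Strategy
set_option linter.unusedSectionVars false
variable {V : Type} [Fintype V] (G : SimpleGraph V)

/-- the strategy induced by a positional policy -/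
def strat (φ : V → V → V) (u : V) : List V → V := fun l => l.foldl φ u

theorem copPos_shift (φ : V → V → V) (u : V) (r : ℕ → V) (k : ℕ) :
    copPos (strat φ u) u r (k + 1)
      = copPos (strat φ (φ u (r 0))) (φ u (r 0)) (fun i => r (i + 1)) k := by
  cases k with
  | zero => simp [copPos, strat]
  | succ k =>
    simp only [copPos, strat]
    rw [List.ofFn_succ]
    simp

theorem copPos_succ (φ : V → V → V) (u : V) (r : ℕ → V) (k : ℕ) :
    copPos (strat φ u) u r (k + 1) = φ (copPos (strat φ u) u r k) (r k) := by
  induction k generalizing u r with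
  | zero => simp [copPos, strat]
  | succ k ih =>
    rw [copPos_shift, ih, ← copPos_shift]

theorem strat_valid (φ : V → V → V) (hφ : ∀ c r, G.Adj c (φ c r)) (u : V) :
    ValidStrategy G (strat φ u) u := by
  intro r k
  rw [copPos_succ]
  exact hφ _ _

theorem captured_shift (φ : V → V → V) (u : V) (r : ℕ → V) (k : ℕ) :
    CapturedBy (strat φ u) u r (k + 1) ↔ r 0 = u ∨ φ u (r 0) = r 0 ∨
      CapturedBy (strat φ (φ u (r 0))) (φ u (r 0)) (fun i => r (i + 1)) k := by
  unfold CapturedBy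
  refine or_congr Iff.rfl ?_
  constructor
  · rintro ⟨j, hj1, hj2, hj⟩
    obtain ⟨i, rfl⟩ : ∃ i, j = i + 1 := ⟨j - 1, by omega⟩
    rw [copPos_shift, Nat.add_sub_cancel] at hj
    cases i with
    | zero =>
      rcases hj with hj | hj
      · left; simpa [copPos] using hj
      · right; left; simpa [copPos] using hj.symm
    | succ i =>
      right; right
      exact ⟨i + 1, by omega, by omega, by simpa using hj⟩
  · rintro (h | h | ⟨j, hj1, hj2, hj⟩)
    · exact ⟨1, by omega, by omega, Or.inl (by rw [copPos_shift]; simpa [copPos] using h)⟩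
    · exact ⟨1, by omega, by omega, Or.inr (by rw [copPos_shift]; simpa [copPos] using h.symm)⟩
    · refine ⟨j + 1, by omega, by omega, ?_⟩
      rw [copPos_shift, Nat.add_sub_cancel]
      obtain ⟨i, rfl⟩ : ∃ i, j = i + 1 := ⟨j - 1, by omega⟩
      simpa using hj

theorem pathWt_shift (r : ℕ → V) (k : ℕ) :
    pathWt G r (k + 1) = (if G.Adj (r 0) (r 1) then ((G.degree (r 0) : ℝ≥0∞))⁻¹ else 0)
      * pathWt G (fun i => r (i + 1)) k := by
  unfold pathWt
  rw [Finset.prod_range_succ', mul_comm]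

theorem pad_cons_zero (k : ℕ) (a : V) (q : Fin (k + 1) → V) :
    pad (k + 1) (Fin.cons a q : Fin (k + 2) → V) 0 = a := by
  simp [pad]

theorem pad_cons_succ (k : ℕ) (a : V) (q : Fin (k + 1) → V) (i : ℕ) :
    pad (k + 1) (Fin.cons a q : Fin (k + 2) → V) (i + 1) = pad k q i := by
  unfold pad
  have : (⟨min (i + 1) (k + 1), Nat.lt_succ_of_le (Nat.min_le_right _ _)⟩ : Fin (k + 2))
      = Fin.succ ⟨min i k, Nat.lt_succ_of_le (Nat.min_le_right i k)⟩ := by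
    ext; simp
  rw [this, Fin.cons_succ]

theorem survival_succ (φ : V → V → V) (u v : V) (k : ℕ) :
    survival G (strat φ u) u v (k + 1) = if u = v then 0 else if φ u v = v then 0 else
      ∑ w, (if G.Adj v w then ((G.degree v : ℝ≥0∞))⁻¹ else 0) *
        survival G (strat φ (φ u v)) (φ u v) w k := by
  have e1 : survival G (strat φ u) u v (k + 1)
      = ∑ q : Fin (k + 1) → V, if u = v then 0 else if φ u v = v then 0 else
          if CapturedBy (strat φ (φ u v)) (φ u v) (pad k q) k then 0 else
          (if G.Adj v (q 0) then ((G.degree v : ℝ≥0∞))⁻¹ else 0) * pathWt G (pad k q) k := by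
    unfold survival
    rw [← (Fin.consEquiv (fun _ : Fin (k + 2) => V)).sum_comp, Fintype.sum_prod_type]
    rw [Finset.sum_eq_single v]
    · refine Finset.sum_congr rfl fun q _ => ?_
      have hsh : (fun i => pad (k + 1) (Fin.cons v q : Fin (k + 2) → V) (i + 1)) = pad k q :=
        funext fun i => pad_cons_succ k v q i
      have h1 : pad (k + 1) (Fin.cons v q : Fin (k + 2) → V) 1 = q 0 :=
        (pad_cons_succ k v q 0).trans (by simp [pad])
      have hce : (Fin.consEquiv (fun _ : Fin (k + 2) => V)) (v, q) =
          (Fin.cons v q : Fin (k + 2) → V) := rfl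
      rw [hce]
      rw [captured_shift, pathWt_shift, hsh, pad_cons_zero, h1]
      simp only [Fin.cons_zero, true_and, eq_comm (a := v) (b := u)]
      by_cases ha : u = v
      · simp [ha]
      by_cases hb : φ u v = v
      · simp [ha, hb]
      by_cases hc : CapturedBy (strat φ (φ u v)) (φ u v) (pad k q) k
      · simp [ha, hb, hc]
      · simp [ha, hb, hc]
    · intro a _ ha
      refine Finset.sum_eq_zero fun q _ => ?_
      simp [Fin.consEquiv, ha]
    · simp
  rw [e1]
  by_cases ha : u = v
  · simp [ha]
  by_cases hb : φ u v = v
  · simp [ha, hb]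
  simp only [ha, hb, if_false]
  unfold survival
  simp_rw [Finset.mul_sum]
  rw [Finset.sum_comm]
  refine Finset.sum_congr rfl fun q _ => ?_
  rw [Finset.sum_eq_single (q 0)]
  · by_cases hc : CapturedBy (strat φ (φ u v)) (φ u v) (pad k q) k <;> simp [hc]
  · intro w _ hw
    simp [hw.symm]
  · simp

theorem survival_zero (φ : V → V → V) (u v : V) :
    survival G (strat φ u) u v 0 = if u = v then 0 else 1 := by
  unfold survival
  rw [Finset.sum_eq_single (fun _ => v)]
  · have : CapturedBy (strat φ u) u (pad 0 fun _ => v) 0 ↔ u = v := by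
      unfold CapturedBy
      constructor
      · rintro (h | ⟨j, h1, h2, -⟩)
        · exact h.symm
        · omega
      · intro h; left; exact h.symm
    simp only [this, true_and, pathWt, Finset.range_zero, Finset.prod_empty]
    split_ifs <;> simp_all
  · intro q _ hq
    have : q 0 ≠ v := fun h => hq (funext fun i => by
      have hi : i = 0 := Fin.ext (by have := i.isLt; simp)
      rw [hi, h])
    simp [this]
  · simp

theorem wtE_ofReal (hd : ∀ v, 0 < G.degree v) (v w : V) :
    (if G.Adj v w then ((G.degree v : ℝ≥0∞))⁻¹ else 0) = ENNReal.ofReal (wt G v w) := by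
  unfold wt
  split_ifs
  · rw [ENNReal.ofReal_inv_of_pos (by exact_mod_cast hd v), ENNReal.ofReal_natCast]
  · simp

theorem sum_survival_le (hd : ∀ v, 0 < G.degree v) (φ : V → V → V) (g : V → V → ℝ)
    (hg : ∀ c r, 0 ≤ g c r) (h : ∀ c r, c ≠ r → moveCost G g (φ c r) r ≤ g c r)
    (K : ℕ) (u v : V) :
    ∑ k ∈ Finset.range K, survival G (strat φ u) u v k ≤ ENNReal.ofReal (g u v) := by
  induction K generalizing u v with
  | zero => simp
  | succ K ih =>
    rw [Finset.sum_range_succ']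
    simp only [survival_succ, survival_zero]
    by_cases ha : u = v
    · simp [ha]
    have h1 := h u v ha
    unfold moveCost at h1
    by_cases hb : φ u v = v
    · simp only [ha, hb, if_false, if_true, Finset.sum_const_zero, zero_add]
      rw [if_pos hb] at h1
      rw [← ENNReal.ofReal_one]
      exact ENNReal.ofReal_le_ofReal (by linarith)
    · simp only [ha, hb, if_false]
      rw [if_neg hb] at h1
      rw [Finset.sum_comm]
      calc ∑ w, ∑ k ∈ Finset.range K, (if G.Adj v w then ((G.degree v : ℝ≥0∞))⁻¹ else 0) *
              survival G (strat φ (φ u v)) (φ u v) w k + 1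
          ≤ ∑ w, ENNReal.ofReal (wt G v w * g (φ u v) w) + 1 := by
            gcongr with w _
            rw [← Finset.mul_sum, wtE_ofReal G hd, ENNReal.ofReal_mul (wt_nonneg G v w)]
            gcongr
            exact ih _ _
        _ = ENNReal.ofReal (PL G (g (φ u v)) v + 1) := by
            rw [PL_apply, ENNReal.ofReal_add _ zero_le_one, ENNReal.ofReal_one,
              ENNReal.ofReal_sum_of_nonneg]
            · exact fun w _ => mul_nonneg (wt_nonneg G v w) (hg _ _)
            · exact Finset.sum_nonneg fun w _ => mul_nonneg (wt_nonneg G v w) (hg _ _)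
        _ ≤ _ := ENNReal.ofReal_le_ofReal (by linarith)

end Strategy
end CopDrunk

/-- **Main theorem.** The cop can capture the drunk robber in expected time `n + o(n)`,
uniformly over all connected `n`-vertex graphs and starting positions: for every `ε > 0`
there is an `N` such that on every connected simple graph on `n ≥ N` vertices, for all
starting vertices `u` (cop) and `v` (robber), some valid cop strategy has expected capture
time at most `(1 + ε)·n`. -/
theorem cop_catches_drunk_in_n_plus_little_o (ε : ℝ) (hε : 0 < ε) :
    ∃ N : ℕ, ∀ n : ℕ, N ≤ n → ∀ (V : Type) [Fintype V], ∀ G : SimpleGraph V,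
      Fintype.card V = n → G.Connected → ∀ u v : V,
        ∃ σ : List V → V, ValidStrategy G σ u ∧
          expCaptureTime G σ u v ≤ ENNReal.ofReal ((1 + ε) * n) := by
  obtain ⟨N, hN2, hN⟩ := CopDrunk.val_bound ε hε
  refine ⟨N, ?_⟩
  intro n hn V _ G hcard hG u v
  have hnt : Nontrivial V := Fintype.one_lt_card_iff_nontrivial.1 (by omega)
  have hd : ∀ v, 0 < G.degree v := fun v => hG.preconnected.degree_pos_of_nontrivial v
  obtain ⟨g, φ, hg0, hgB, hadj, hmove⟩ := CopDrunk.exists_policy G hd _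
    (hN V G (by omega) hG hd)
  refine ⟨CopDrunk.strat φ u, CopDrunk.strat_valid G φ hadj u, ?_⟩
  refine (ENNReal.tsum_le_of_sum_range_le fun K =>
    CopDrunk.sum_survival_le G hd φ g hg0 hmove K u v).trans ?_
  refine ENNReal.ofReal_le_ofReal ?_
  rw [← hcard]
  exact hgB u v
end

section
/- Let G be a finite connected simple graph on n ≥ 2 vertices, let x_0 be any vertex of G, and let (x_0, x_1, …, x_t) be a simple random walk on G. Then the expected distance covered in time t satisfies E[ d(x_0, x_t) ] < 1 + √t · √(1 + 5 log n). -/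
open scoped Classical

/-- One-step transition weight of the simple random walk on `G`:
`1/deg a` if `a ∼ b`, and `0` otherwise. -/
noncomputable def stepWt {V : Type} [Fintype V] (G : SimpleGraph V) (a b : V) : ℝ :=
  if G.Adj a b then ((G.degree a : ℝ))⁻¹ else 0

/-- Probability that the simple random walk on `G` of length `t`, started at `x0`,
produces a trajectory satisfying the event `E`. -/
noncomputable def walkProb {V : Type} [Fintype V] (G : SimpleGraph V) (t : ℕ) (x0 : V)
    (E : (Fin (t + 1) → V) → Prop) : ℝ :=
  ∑ p : Fin (t + 1) → V,
    if p 0 = x0 ∧ E p then ∏ i : Fin t, stepWt G (p i.castSucc) (p i.succ) else 0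

/-- Expectation of the functional `f` of the trajectory of the simple random walk on `G`
of length `t`, started at `x0`. -/
noncomputable def walkExp {V : Type} [Fintype V] (G : SimpleGraph V) (t : ℕ) (x0 : V)
    (f : (Fin (t + 1) → V) → ℝ) : ℝ :=
  ∑ p : Fin (t + 1) → V,
    (if p 0 = x0 then ∏ i : Fin t, stepWt G (p i.castSucc) (p i.succ) else 0) * f p

open Polynomial in
theorem aux_pell (m : ℕ) :
    (Chebyshev.T ℝ ((m : ℤ) + 1)) ^ 2 + (1 - X ^ 2) * (Chebyshev.U ℝ (m : ℤ)) ^ 2 = 1 := by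
  induction m with
  | zero => simp
  | succ m ih =>
    have h1 := Chebyshev.T_eq_X_mul_T_sub_pol_U ℝ (m : ℤ)
    have h2 := Chebyshev.U_eq_X_mul_U_add_T ℝ (m : ℤ)
    have e : ((m + 1 : ℕ) : ℤ) + 1 = (m : ℤ) + 2 := by push_cast; ring
    rw [e]
    push_cast
    rw [h1, h2]
    linear_combination ih

open Polynomial in
theorem aux_pell' (k : ℤ) : ∃ q : ℝ[X],
    (Chebyshev.T ℝ k) ^ 2 + (1 - X ^ 2) * q ^ 2 = 1 := by
  have key : ∀ m : ℕ, ∃ q : ℝ[X],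
    (Chebyshev.T ℝ (m : ℤ)) ^ 2 + (1 - X ^ 2) * q ^ 2 = 1 := by
    intro m
    cases m with
    | zero => exact ⟨0, by simp⟩
    | succ m => exact ⟨_, by push_cast; exact aux_pell m⟩
  rcases Int.eq_nat_or_neg k with ⟨m, rfl | rfl⟩
  · exact key m
  · rw [Chebyshev.T_neg]; exact key m

open Polynomial Matrix in
theorem aux_symm {V : Type} [Fintype V] (S : Matrix V V ℝ) (hS : Sᵀ = S) (q : ℝ[X]) :
    (aeval S q)ᵀ = aeval S q := by
  induction q using Polynomial.induction_on' with
  | add p q hp hq => simp [hp, hq]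
  | monomial n a =>
    rw [aeval_monomial, Matrix.algebraMap_eq_diagonal]
    rw [Matrix.transpose_mul, Matrix.transpose_pow, hS, Matrix.diagonal_transpose]
    rw [← Matrix.algebraMap_eq_diagonal]
    exact (Algebra.commutes a (S ^ n)).symm

open Polynomial Matrix in
theorem aux_cheb_le {V : Type} [Fintype V] (S : Matrix V V ℝ) (hS : Sᵀ = S)
    (hc : ∀ f : V → ℝ, (S *ᵥ f) ⬝ᵥ (S *ᵥ f) ≤ f ⬝ᵥ f) (k : ℤ) (x y : V) :
    |aeval S (Chebyshev.T ℝ k) x y| ≤ 1 := by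
  obtain ⟨q, hq⟩ := aux_pell' k
  set M := aeval S (Chebyshev.T ℝ k) with hM
  set N := aeval S q with hN
  have hMs : Mᵀ = M := aux_symm S hS _
  have hNs : Nᵀ = N := aux_symm S hS _
  have h : M * M + (N * N - (S * N)ᵀ * (S * N)) = 1 := by
    have := congrArg (aeval S) hq
    simp only [map_add, map_mul, map_pow, map_sub, map_one, aeval_X] at this
    rw [← hM, ← hN] at this
    have hcomm : S * N = N * S := by
      have := congrArg (aeval S) (mul_comm X q)
      simpa using this
    rw [Matrix.transpose_mul, hNs, hS, ← this]
    have : N * S * (S * N) = S * S * (N * N) := by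
      rw [← hcomm]
      simp only [Matrix.mul_assoc]
      rw [← Matrix.mul_assoc N S N, ← hcomm, Matrix.mul_assoc]
    rw [this]
    noncomm_ring
  have hyy := congrFun (congrFun h y) y
  simp only [Matrix.add_apply, Matrix.sub_apply, Matrix.one_apply_eq] at hyy
  have h1 : (M * M) y y = ∑ z, M z y ^ 2 := by
    conv_lhs => rw [← hMs]
    simp only [Matrix.mul_apply, Matrix.transpose_apply]
    refine Finset.sum_congr rfl fun z _ => ?_
    have : M y z = M z y := by conv_lhs => rw [← hMs, Matrix.transpose_apply]
    try rw [this]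
    ring
  have h2 : (N * N) y y = (fun z => N z y) ⬝ᵥ (fun z => N z y) := by
    rw [Matrix.mul_apply, dotProduct]
    refine Finset.sum_congr rfl fun z _ => ?_
    have : N y z = N z y := by conv_lhs => rw [← hNs, Matrix.transpose_apply]
    rw [this]
  have h3 : ((S * N)ᵀ * (S * N)) y y = (S *ᵥ (fun z => N z y)) ⬝ᵥ (S *ᵥ (fun z => N z y)) := by
    rw [Matrix.mul_apply, dotProduct]
    refine Finset.sum_congr rfl fun z _ => ?_
    rw [Matrix.transpose_apply]
    rfl
  have h4 := hc (fun z => N z y)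
  have h5 : M x y ^ 2 ≤ ∑ z, M z y ^ 2 :=
    Finset.single_le_sum (f := fun z => M z y ^ 2) (fun z _ => sq_nonneg _) (Finset.mem_univ x)
  rw [← sq_le_one_iff_abs_le_one]
  linarith

open Polynomial Matrix in
theorem aux_pow_zero {V : Type} [Fintype V] (G : SimpleGraph V) (hconn : G.Connected)
    (S : Matrix V V ℝ) (hS : ∀ x y, ¬ G.Adj x y → S x y = 0) (j : ℕ) :
    ∀ x y, j < G.dist x y → (S ^ j) x y = 0 := by
  induction j with
  | zero =>
    intro x y h
    rw [pow_zero, Matrix.one_apply_ne]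
    rintro rfl
    simp at h
  | succ j ih =>
    intro x y h
    rw [pow_succ', Matrix.mul_apply]
    refine Finset.sum_eq_zero fun z _ => ?_
    by_cases hz : G.Adj x z
    · rw [ih z y, mul_zero]
      have := hconn.dist_triangle (u := x) (v := z) (w := y)
      have h1 : G.dist x z = 1 := SimpleGraph.dist_eq_one_iff_adj.mpr hz
      omega
    · rw [hS x z hz, zero_mul]

open Polynomial Matrix in
theorem aux_cheb_zero {V : Type} [Fintype V] (G : SimpleGraph V) (hconn : G.Connected)
    (S : Matrix V V ℝ) (hS : ∀ x y, ¬ G.Adj x y → S x y = 0) (k : ℤ) (x y : V)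
    (h : k.natAbs < G.dist x y) : aeval S (Chebyshev.T ℝ k) x y = 0 := by
  rw [aeval_eq_sum_range, Matrix.sum_apply]
  refine Finset.sum_eq_zero fun j hj => ?_
  rw [Chebyshev.natDegree_T, Finset.mem_range] at hj
  rw [Matrix.smul_apply, aux_pow_zero G hconn S hS j x y (by omega), smul_zero]

open Polynomial Matrix in
theorem aux_carne {V : Type} [Fintype V] (G : SimpleGraph V) (hconn : G.Connected)
    (S : Matrix V V ℝ) (hS : ∀ x y, ¬ G.Adj x y → S x y = 0) (hs : Sᵀ = S)
    (hc : ∀ f : V → ℝ, (S *ᵥ f) ⬝ᵥ (S *ᵥ f) ≤ f ⬝ᵥ f) (l : ℝ) (hl : 0 ≤ l) (x y : V) (t : ℕ) :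
    ∀ k : ℤ, |aeval S (X ^ t * Chebyshev.T ℝ k) x y| ≤
      2 * Real.exp (- l * G.dist x y) * Real.cosh l ^ t * Real.cosh (l * k) := by
  induction t with
  | zero =>
    intro k
    rw [pow_zero, one_mul, pow_zero, mul_one]
    by_cases h : k.natAbs < G.dist x y
    · rw [aux_cheb_zero G hconn S hS k x y h, abs_zero]
      have := Real.cosh_pos (l * k)
      positivity
    · refine (aux_cheb_le S hs hc k x y).trans ?_
      have hk : (G.dist x y : ℝ) ≤ |(k : ℝ)| := by
        rw [← Int.cast_abs, Int.abs_eq_natAbs]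
        exact_mod_cast not_lt.mp h
      rw [← Real.cosh_abs, abs_mul, abs_of_nonneg hl, Real.cosh_eq]
      have h1 : 1 ≤ Real.exp (- l * G.dist x y) * Real.exp (l * |(k : ℝ)|) := by
        rw [← Real.exp_add]
        apply Real.one_le_exp
        nlinarith
      have h2 : 0 < Real.exp (- l * G.dist x y) * Real.exp (- (l * |(k : ℝ)|)) := by positivity
      linarith
  | succ t ih =>
    intro k
    have e : X ^ (t + 1) * Chebyshev.T ℝ k
      = C (1 / 2 : ℝ) * (X ^ t * Chebyshev.T ℝ (k + 1) + X ^ t * Chebyshev.T ℝ (k - 1)) := by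
      rw [Chebyshev.T_add_one]
      have : (C (1 / 2 : ℝ) : ℝ[X]) * 2 = 1 := by
        rw [show (2 : ℝ[X]) = C 2 from rfl, ← C_mul]; norm_num
      linear_combination (- X ^ (t + 1) * Chebyshev.T ℝ k) * this
    have e2 : aeval S (X ^ (t + 1) * Chebyshev.T ℝ k) x y
      = 1 / 2 * (aeval S (X ^ t * Chebyshev.T ℝ (k + 1)) x y
        + aeval S (X ^ t * Chebyshev.T ℝ (k - 1)) x y) := by
      rw [e, ← smul_eq_C_mul, map_smul, map_add]
      simp
    rw [e2, abs_mul, abs_of_pos (by norm_num : (0 : ℝ) < 1 / 2)]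
    have h1 := ih (k + 1)
    have h2 := ih (k - 1)
    have h3 := abs_add_le (aeval S (X ^ t * Chebyshev.T ℝ (k + 1)) x y)
      (aeval S (X ^ t * Chebyshev.T ℝ (k - 1)) x y)
    have h4 : Real.cosh (l * (k + 1 : ℤ)) + Real.cosh (l * (k - 1 : ℤ))
        = 2 * Real.cosh l * Real.cosh (l * k) := by
      push_cast
      rw [mul_add, mul_sub, mul_one, Real.cosh_add, Real.cosh_sub]; ring
    calc _ ≤ 1 / 2 * ((2 * Real.exp (- l * G.dist x y) * Real.cosh l ^ t)
              * (Real.cosh (l * (k + 1 : ℤ)) + Real.cosh (l * (k - 1 : ℤ)))) := by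
            linarith
      _ = _ := by rw [h4]; ring

/-- Transition matrix. -/
noncomputable def auxP {V : Type} [Fintype V] (G : SimpleGraph V) : Matrix V V ℝ :=
  Matrix.of fun a b => stepWt G a b

/-- Symmetrised transition matrix. -/
noncomputable def auxS {V : Type} [Fintype V] (G : SimpleGraph V) : Matrix V V ℝ :=
  Matrix.of fun a b => if G.Adj a b then (√(G.degree a))⁻¹ * (√(G.degree b))⁻¹ else 0

theorem auxS_symm {V : Type} [Fintype V] (G : SimpleGraph V) : (auxS G).transpose = auxS G := by
  ext a b
  simp only [auxS, Matrix.transpose_apply, Matrix.of_apply, G.adj_comm b a]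
  split_ifs <;> ring

theorem aux_row {V : Type} [Fintype V] (G : SimpleGraph V) (hd : ∀ v, 0 < G.degree v) (a : V) :
    ∑ b, stepWt G a b = 1 := by
  simp only [stepWt]
  rw [← Finset.sum_filter, Finset.sum_const, nsmul_eq_mul]
  have : (Finset.univ.filter fun b => G.Adj a b).card = G.degree a := by
    rw [← SimpleGraph.card_neighborFinset_eq_degree]
    congr 1
    ext b
    simp
  rw [this]
  have := hd a
  field_simp

open Matrix in
theorem auxS_contr {V : Type} [Fintype V] (G : SimpleGraph V) (hd : ∀ v, 0 < G.degree v)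
    (f : V → ℝ) : (auxS G *ᵥ f) ⬝ᵥ (auxS G *ᵥ f) ≤ f ⬝ᵥ f := by
  have h : ∀ a, (auxS G *ᵥ f) a * (auxS G *ᵥ f) a ≤ ∑ b, stepWt G b a * (f b * f b) := by
    intro a
    have := Finset.sum_sq_le_sum_mul_sum_of_sq_le_mul Finset.univ
      (r := fun b => auxS G a b * f b) (f := fun b => stepWt G a b)
      (g := fun b => stepWt G b a * (f b * f b)) ?_ ?_ ?_
    · rw [aux_row G hd a, one_mul, sq] at this
      exact this
    · intro b _
      simp only [stepWt]; positivity
    · intro b _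
      have := mul_self_nonneg (f b)
      simp only [stepWt]; positivity
    · intro b _
      apply le_of_eq
      simp only [stepWt, auxS, Matrix.of_apply, G.adj_comm b a]
      split_ifs
      · rw [mul_pow, mul_pow, inv_pow, inv_pow, Real.sq_sqrt (by positivity),
          Real.sq_sqrt (by positivity)]
        ring
      · ring
  calc _ ≤ ∑ a, ∑ b, stepWt G b a * (f b * f b) := Finset.sum_le_sum fun a _ => h a
    _ = ∑ b, f b * f b := by
      rw [Finset.sum_comm]
      refine Finset.sum_congr rfl fun b _ => ?_
      rw [← Finset.sum_mul, aux_row G hd b, one_mul]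

theorem auxP_pow {V : Type} [Fintype V] (G : SimpleGraph V) (hd : ∀ v, 0 < G.degree v) (t : ℕ) :
    ∀ x y, (auxP G ^ t) x y = (√(G.degree x))⁻¹ * √(G.degree y) * (auxS G ^ t) x y := by
  have hp : ∀ v, √(G.degree v : ℝ) ≠ 0 := fun v =>
    (Real.sqrt_pos.mpr (by exact_mod_cast hd v)).ne'
  induction t with
  | zero =>
    intro x y
    simp only [pow_zero]
    by_cases h : x = y
    · subst h
      simp [inv_mul_cancel₀ (hp x)]
    · simp [Matrix.one_apply_ne h]
  | succ t ih =>
    intro x y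
    rw [pow_succ', pow_succ', Matrix.mul_apply, Matrix.mul_apply, Finset.mul_sum]
    refine Finset.sum_congr rfl fun z _ => ?_
    rw [ih z y]
    have : auxP G x z = (√(G.degree x))⁻¹ * √(G.degree z) * auxS G x z := by
      simp only [auxP, auxS, stepWt, Matrix.of_apply]
      split_ifs
      · have := hp z
        have := hp x
        rw [← Real.sq_sqrt (show (0 : ℝ) ≤ G.degree x by positivity)]
        rw [Real.sqrt_sq (by positivity)]
        field_simp
      · ring
    rw [this]
    have := hp z
    field_simp

theorem auxP_row {V : Type} [Fintype V] (G : SimpleGraph V) (hd : ∀ v, 0 < G.degree v) (t : ℕ) :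
    ∀ x, ∑ y, (auxP G ^ t) x y = 1 := by
  induction t with
  | zero => intro x; simp [Matrix.one_apply]
  | succ t ih =>
    intro x
    simp only [pow_succ', Matrix.mul_apply]
    rw [Finset.sum_comm]
    simp only [← Finset.mul_sum, ih, mul_one]
    exact aux_row G hd x

theorem auxP_nonneg {V : Type} [Fintype V] (G : SimpleGraph V) (t : ℕ) :
    ∀ x y, 0 ≤ (auxP G ^ t) x y := by
  induction t with
  | zero => intro x y; rw [pow_zero, Matrix.one_apply]; positivity
  | succ t ih =>
    intro x y
    rw [pow_succ', Matrix.mul_apply]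
    refine Finset.sum_nonneg fun z _ => mul_nonneg ?_ (ih z y)
    simp only [auxP, stepWt, Matrix.of_apply]
    positivity

theorem aux_walkExp {V : Type} [Fintype V] (G : SimpleGraph V) (g : V → ℝ) (t : ℕ) :
    ∀ x, walkExp G t x (fun p => g (p (Fin.last t))) = ∑ y, (auxP G ^ t) x y * g y := by
  induction t with
  | zero =>
    intro x
    simp only [walkExp, pow_zero]
    rw [← (Equiv.funUnique (Fin 1) V).symm.sum_comp]
    refine Finset.sum_congr rfl fun y _ => ?_
    simp [Matrix.one_apply, eq_comm]
  | succ t ih =>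
    intro x
    have step : walkExp G (t + 1) x (fun p => g (p (Fin.last (t + 1))))
        = ∑ z, stepWt G x z * walkExp G t z (fun p => g (p (Fin.last t))) := by
      simp only [walkExp]
      rw [← (Fin.consEquiv (fun _ : Fin (t + 2) => V)).sum_comp, Fintype.sum_prod_type]
      rw [Finset.sum_eq_single x]
      · simp only [Finset.mul_sum]
        rw [Finset.sum_comm]
        refine Finset.sum_congr rfl fun q _ => ?_
        rw [Finset.sum_eq_single (q 0)]
        · simp [Fin.consEquiv, Fin.prod_univ_succ, ← Fin.succ_last, ← Fin.succ_castSucc, -Fin.castSucc_succ, mul_assoc]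
        · intro b _ hb
          simp [hb.symm]
        · simp
      · intro b _ hb
        simp [Fin.consEquiv, hb]
      · simp
    rw [step]
    simp only [ih, pow_succ', Matrix.mul_apply, Finset.mul_sum, Finset.sum_mul]
    rw [Finset.sum_comm]
    simp only [auxP, Matrix.of_apply, mul_assoc]

open Polynomial in
theorem aux_point {V : Type} [Fintype V] (G : SimpleGraph V) (n : ℕ) (hn : 2 ≤ n)
    (hcard : Fintype.card V = n) (hconn : G.Connected) (hd : ∀ v, 0 < G.degree v)
    (x y : V) (t : ℕ) (ht : 0 < t) (L r : ℝ) (hL : L = 1 + 5 * Real.log n)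
    (hr : 0 < r) (hrt : r ^ 2 = t * L) :
    (auxP G ^ t) x y * G.dist x y ≤ (auxP G ^ t) x y * r + 2 / (n * L) := by
  have hn0 : (0 : ℝ) < n := by positivity
  have ht0 : (0 : ℝ) < t := by exact_mod_cast ht
  have hlog : 0 ≤ Real.log n := Real.log_natCast_nonneg n
  have hL0 : 0 < L := by linarith
  have hP := auxP_nonneg G t x y
  rcases le_or_gt (G.dist x y : ℝ) r with h | h
  · have := mul_le_mul_of_nonneg_left h hP
    have : 0 < 2 / (n * L) := by positivity
    linarith
  have hdn : G.dist x y < n := by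
    obtain ⟨p, hp, hl⟩ := hconn.exists_path_of_dist x y
    rw [← hl, ← hcard]
    exact hp.length_lt
  have hrn : r < n := h.trans (by exact_mod_cast hdn)
  set s := (G.dist x y : ℝ) - r with hs
  have hs0 : 0 < s := by linarith
  set l := r / t with hl
  have hl0 : 0 < l := by positivity
  have hc := aux_carne G hconn (auxS G) (fun a b hab => by simp [auxS, hab]) (auxS_symm G)
    (auxS_contr G hd) l hl0.le x y t 0
  simp only [Chebyshev.T_zero, mul_one, map_pow, aeval_X, Int.cast_zero, mul_zero,
    Real.cosh_zero] at hc
  have hcosh : Real.cosh l ^ t ≤ Real.exp (l ^ 2 / 2 * t) := by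
    rw [mul_comm, Real.exp_nat_mul]
    exact pow_le_pow_left₀ (Real.cosh_pos l).le (Real.cosh_le_exp_half_sq l) t
  have hdeg : (√(G.degree x : ℝ))⁻¹ * √(G.degree y) ≤ Real.exp (Real.log n / 2) := by
    have h1 : (√(G.degree x : ℝ))⁻¹ ≤ 1 := by
      apply inv_le_one_of_one_le₀
      rw [Real.one_le_sqrt]
      exact_mod_cast hd x
    have h2 : √(G.degree y : ℝ) ≤ Real.exp (Real.log n / 2) := by
      rw [Real.exp_half, Real.exp_log hn0]
      apply Real.sqrt_le_sqrt
      have := (G.degree_lt_card_verts y).le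
      rw [hcard] at this
      exact_mod_cast this
    calc _ ≤ 1 * √(G.degree y : ℝ) := by gcongr
      _ ≤ _ := by rw [one_mul]; exact h2
  have hPb : (auxP G ^ t) x y ≤ 2 * (Real.exp (- 2 * Real.log n) * Real.exp (-(l * s))) := by
    rw [auxP_pow G hd]
    calc _ ≤ Real.exp (Real.log n / 2) *
          (2 * Real.exp (- l * G.dist x y) * Real.exp (l ^ 2 / 2 * t)) := by
          refine (mul_le_mul_of_nonneg_left
            ((le_abs_self _).trans (hc.trans (by gcongr))) (by positivity)).trans
            (mul_le_mul_of_nonneg_right hdeg (by positivity))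
      _ = 2 * Real.exp (Real.log n / 2 + - l * G.dist x y + l ^ 2 / 2 * t) := by
          rw [Real.exp_add, Real.exp_add]; ring
      _ ≤ _ := by
          rw [← Real.exp_add]
          have e1 : l ^ 2 * t = L := by
            rw [hl, div_pow, hrt]; field_simp
          have e2 : l * r = L := by
            rw [hl, div_mul_eq_mul_div, ← sq, hrt]; field_simp
          have e3 : (G.dist x y : ℝ) = s + r := by rw [hs]; ring
          refine mul_le_mul_of_nonneg_left (Real.exp_le_exp.mpr ?_) (by norm_num)
          rw [e3]
          nlinarith
  have hexp : Real.exp (- 2 * Real.log n) = 1 / n ^ 2 := by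
    rw [neg_mul, Real.exp_neg, show 2 * Real.log n = ((2 : ℕ) : ℝ) * Real.log n by norm_num,
      Real.exp_nat_mul, Real.exp_log hn0, one_div]
  have hse : Real.exp (-(l * s)) * s ≤ r / L := by
    have h1 : l * s ≤ Real.exp (l * s) := by linarith [Real.add_one_le_exp (l * s)]
    have h2 : Real.exp (-(l * s)) * (l * s) ≤ 1 := by
      calc _ ≤ Real.exp (-(l * s)) * Real.exp (l * s) := by gcongr
        _ = 1 := by rw [← Real.exp_add]; simp
    have e2 : l * r = L := by
      rw [hl, div_mul_eq_mul_div, ← sq, hrt]; field_simp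
    rw [← e2, le_div_iff₀ (by positivity)]
    calc _ = r * (Real.exp (-(l * s)) * (l * s)) := by ring
      _ ≤ r * 1 := by gcongr
      _ = r := mul_one r
  have : (auxP G ^ t) x y * s ≤ 2 / (n * L) := by
    calc _ ≤ 2 * (Real.exp (- 2 * Real.log n) * Real.exp (-(l * s))) * s := by gcongr
      _ = 2 / n ^ 2 * (Real.exp (-(l * s)) * s) := by rw [hexp]; ring
      _ ≤ 2 / n ^ 2 * (n / L) := by
        gcongr
        exact hse.trans (by gcongr)
      _ = _ := by field_simp
  have e : (auxP G ^ t) x y * s = (auxP G ^ t) x y * G.dist x y - (auxP G ^ t) x y * r := by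
    rw [hs]; ring
  linarith

/-- **Key Lemma.** The expected distance covered in time `t` by a simple random walk on a
connected simple graph on `n ≥ 2` vertices is less than `1 + √t·√(1 + 5 log n)`. -/
theorem expected_distance_bound {V : Type} [Fintype V] (G : SimpleGraph V) (n : ℕ) (hn : 2 ≤ n)
    (hcard : Fintype.card V = n) (hconn : G.Connected) (x0 : V) (t : ℕ) :
    walkExp G t x0 (fun p => (G.dist x0 (p (Fin.last t)) : ℝ))
      < 1 + Real.sqrt t * Real.sqrt (1 + 5 * Real.log n) := by
  have hnt : Nontrivial V := Fintype.one_lt_card_iff_nontrivial.mp (by omega)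
  have hd : ∀ v, 0 < G.degree v := fun v => hconn.preconnected.degree_pos_of_nontrivial v
  rw [aux_walkExp G (fun y => (G.dist x0 y : ℝ)) t x0]
  rcases Nat.eq_zero_or_pos t with rfl | ht
  · simp [Matrix.one_apply]
  have hlog : Real.log 2 ≤ Real.log n := Real.log_le_log (by norm_num) (by exact_mod_cast hn)
  have hl2 := Real.log_two_gt_d9
  have hL : 2 < 1 + 5 * Real.log n := by linarith
  have ht0 : (0 : ℝ) < t := by exact_mod_cast ht
  have hn0 : (0 : ℝ) < n := by positivity
  have hL0 : 0 < 1 + 5 * Real.log n := by linarith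
  have hr : 0 < Real.sqrt t * Real.sqrt (1 + 5 * Real.log n) := by positivity
  have key := Finset.sum_le_sum (s := Finset.univ) fun y _ =>
    aux_point G n hn hcard hconn hd x0 y t ht _ (Real.sqrt t * Real.sqrt (1 + 5 * Real.log n)) rfl
    hr (by rw [mul_pow, Real.sq_sqrt ht0.le, Real.sq_sqrt hL0.le])
  rw [Finset.sum_add_distrib, ← Finset.sum_mul, auxP_row G hd, one_mul, Finset.sum_const,
    Finset.card_univ, hcard, nsmul_eq_mul] at key
  have : (n : ℝ) * (2 / (n * (1 + 5 * Real.log n))) < 1 := by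
    rw [show (n : ℝ) * (2 / (n * (1 + 5 * Real.log n))) = 2 / (1 + 5 * Real.log n) by field_simp,
      div_lt_one hL0]
    exact hL
  linarith
end

section
/- Let G be a finite connected simple graph on n ≥ 2 vertices, let (x_0, x_1, …) be a simple random walk on G started at a vertex x_0, and let t be a natural number with t ≤ n. Then E[ d(x_0, x_t) ] ≤ 1 + √n · √(1 + 5 log n). (In particular, the distance D₁ between the drunk's initial position and his position after the cop has walked to that initial position satisfies E[D₁] ≤ 1 + √n·√(1 + 5 log n), since the cop's travel time is at most the diameter of G, hence at most n.) -/
open scoped Classical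

open Matrix

namespace VC

variable {V : Type} [Fintype V] (G : SimpleGraph V)

/-- Expectation of a function of the final position, first-step recursion. -/
lemma walkExp_zero (x : V) (f : V → ℝ) :
    walkExp G 0 x (fun p => f (p (Fin.last 0))) = f x := by
  unfold walkExp
  rw [← (Equiv.funUnique (Fin 1) V).symm.sum_comp]
  simp [Equiv.funUnique]

lemma walkExp_succ (t : ℕ) (x : V) (f : V → ℝ) :
    walkExp G (t+1) x (fun p => f (p (Fin.last (t+1)))) =
      ∑ z, stepWt G x z * walkExp G t z (fun p => f (p (Fin.last t))) := by
  unfold walkExp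
  rw [← (Fin.consEquiv (fun _ : Fin (t+2) => V)).sum_comp, Fintype.sum_prod_type]
  simp only [Fin.consEquiv_apply, Fin.cons_zero]
  rw [Finset.sum_eq_single x]
  · simp_rw [Finset.mul_sum]
    rw [Finset.sum_comm]
    refine Finset.sum_congr rfl fun p _ => ?_
    rw [Finset.sum_eq_single (p 0)]
    · rw [Fin.prod_univ_succ, ← Fin.succ_last]
      simp only [if_true, Fin.castSucc_zero, Fin.cons_zero, Fin.cons_succ, ← Fin.succ_castSucc]
      ring
    · intro b _ hb
      simp [hb.symm]
    · simp
  · intro b _ hb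
    simp [hb]
  · simp

/-- transition matrix -/
noncomputable def P : Matrix V V ℝ := fun a b => stepWt G a b

/-- symmetrised transition matrix -/
noncomputable def Q : Matrix V V ℝ := fun a b =>
  if G.Adj a b then (Real.sqrt (G.degree a))⁻¹ * (Real.sqrt (G.degree b))⁻¹ else 0

lemma walkExp_eq (t : ℕ) (x : V) (f : V → ℝ) :
    walkExp G t x (fun p => f (p (Fin.last t))) = ∑ y, ((P G)^t) x y * f y := by
  induction t generalizing x with
  | zero => rw [walkExp_zero]; simp [Matrix.one_apply]
  | succ t ih =>
    rw [walkExp_succ]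
    simp_rw [ih, pow_succ', Matrix.mul_apply, Finset.mul_sum, Finset.sum_mul]
    rw [Finset.sum_comm]
    simp only [P, mul_assoc]

lemma Q_herm : (Q G).IsHermitian := by
  ext a b
  simp only [Q, Matrix.conjTranspose_apply, star_trivial, G.adj_comm, mul_comm]

lemma P_pow (hd : ∀ a, 0 < G.degree a) (t : ℕ) (x y : V) :
    ((P G)^t) x y = (Real.sqrt (G.degree x))⁻¹ * ((Q G)^t) x y * Real.sqrt (G.degree y) := by
  have hs : ∀ a, Real.sqrt (G.degree a) ≠ 0 := fun a =>
    (Real.sqrt_pos.2 (by exact_mod_cast hd a)).ne'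
  induction t generalizing x with
  | zero =>
    by_cases h : x = y
    · subst h; simp [hs]
    · simp [Matrix.one_apply, h]
  | succ t ih =>
    simp_rw [pow_succ', Matrix.mul_apply, ih, Finset.mul_sum, Finset.sum_mul]
    refine Finset.sum_congr rfl fun z _ => ?_
    simp only [P, stepWt, Q]
    split_ifs
    · have : (G.degree x : ℝ)⁻¹ = (Real.sqrt (G.degree x))⁻¹ * (Real.sqrt (G.degree x))⁻¹ := by
        rw [← mul_inv, Real.mul_self_sqrt (by positivity)]
      rw [this]; ring
    · simp

lemma sum_step (hd : ∀ a, 0 < G.degree a) (x : V) : ∑ z, stepWt G x z = 1 := by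
  unfold stepWt
  rw [← Finset.sum_filter, Finset.sum_const, ← SimpleGraph.neighborFinset_eq_filter,
    SimpleGraph.card_neighborFinset_eq_degree, nsmul_eq_mul]
  exact mul_inv_cancel₀ (by exact_mod_cast (hd x).ne')

lemma step_nonneg (x z : V) : 0 ≤ stepWt G x z := by
  unfold stepWt; split_ifs <;> positivity

lemma P_pow_nonneg (t : ℕ) (x y : V) : 0 ≤ ((P G)^t) x y := by
  induction t generalizing x with
  | zero => simp only [pow_zero, Matrix.one_apply]; split_ifs <;> norm_num
  | succ t ih =>
    rw [pow_succ', Matrix.mul_apply]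
    exact Finset.sum_nonneg fun z _ => mul_nonneg (step_nonneg G x z) (ih z)

lemma P_pow_sum (hd : ∀ a, 0 < G.degree a) (t : ℕ) (x : V) : ∑ y, ((P G)^t) x y = 1 := by
  induction t generalizing x with
  | zero => simp [Matrix.one_apply]
  | succ t ih =>
    simp_rw [pow_succ', Matrix.mul_apply]
    rw [Finset.sum_comm]
    simp_rw [← Finset.mul_sum, ih, mul_one]
    exact sum_step G hd x

/-- eigenvalues of the symmetrised matrix lie in `[-1,1]` -/
lemma eig_bound (hd : ∀ a, 0 < G.degree a) (v : V → ℝ) (hv : v ≠ 0) (μ : ℝ)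
    (h : Q G *ᵥ v = μ • v) : |μ| ≤ 1 := by
  have hs : ∀ a, 0 < Real.sqrt (G.degree a) := fun a =>
    Real.sqrt_pos.2 (by exact_mod_cast hd a)
  obtain ⟨w, hw⟩ : ∃ w, v w ≠ 0 := Function.ne_iff.1 hv
  have : Nonempty V := ⟨w⟩
  obtain ⟨a, ha⟩ := Finite.exists_max (fun a => |v a| / Real.sqrt (G.degree a))
  have hpos : 0 < |v a| / Real.sqrt (G.degree a) :=
    lt_of_lt_of_le (div_pos (abs_pos.2 hw) (hs w)) (ha w)
  have e := congrFun h a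
  simp only [Matrix.mulVec, dotProduct, Pi.smul_apply, smul_eq_mul] at e
  have key : |μ| * (|v a| / Real.sqrt (G.degree a)) ≤ 1 * (|v a| / Real.sqrt (G.degree a)) := by
    calc |μ| * (|v a| / Real.sqrt (G.degree a))
        = |∑ b, Q G a b * v b| / Real.sqrt (G.degree a) := by rw [e, abs_mul]; ring
      _ ≤ (∑ b, |Q G a b * v b|) / Real.sqrt (G.degree a) := by
          gcongr; exact Finset.abs_sum_le_sum_abs _ _
      _ = ∑ b, |Q G a b * v b| / Real.sqrt (G.degree a) := by rw [Finset.sum_div]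
      _ ≤ ∑ b, stepWt G a b * (|v a| / Real.sqrt (G.degree a)) := by
          refine Finset.sum_le_sum fun b _ => ?_
          refine le_trans (le_of_eq ?_) (mul_le_mul_of_nonneg_left (ha b) (step_nonneg G a b))
          simp only [Q, stepWt]
          split_ifs
          · have h2 : (G.degree a : ℝ)⁻¹ = (Real.sqrt (G.degree a))⁻¹ * (Real.sqrt (G.degree a))⁻¹ := by
              rw [← mul_inv, Real.mul_self_sqrt (by positivity)]
            rw [h2, abs_mul, abs_of_nonneg (by positivity)]
            ring
          · simp
      _ = _ := by rw [← Finset.sum_mul, sum_step G hd]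
  exact le_of_mul_le_mul_right key hpos

/-- Existence of the "wave kernels" `cos (k θ)` of the walk. -/
lemma exists_K (hd : ∀ a, 0 < G.degree a) : ∃ K : ℤ → Matrix V V ℝ,
    K 0 = 1 ∧ K 1 = Q G ∧ (∀ k, K (-k) = K k) ∧
    (∀ k, Q G * K k = (2:ℝ)⁻¹ • (K (k+1) + K (k-1))) ∧
    ∀ k x, ∑ y, (K k x y)^2 ≤ 1 := by
  set H := Q_herm G
  set U : Matrix V V ℝ := (H.eigenvectorUnitary : Matrix V V ℝ) with hU
  have h1 : U * Uᴴ = 1 := Unitary.coe_mul_star_self H.eigenvectorUnitary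
  have h2 : Uᴴ * U = 1 := Unitary.coe_star_mul_self H.eigenvectorUnitary
  have hQ : Q G = U * diagonal H.eigenvalues * Uᴴ := by
    have := H.spectral_theorem
    rw [Unitary.conjStarAlgAut_apply] at this
    exact this
  have hμ : ∀ i, |H.eigenvalues i| ≤ 1 := by
    intro i
    refine eig_bound G hd (H.eigenvectorBasis i).ofLp ?_ _ (H.mulVec_eigenvectorBasis i)
    intro h0
    have := H.eigenvectorBasis.orthonormal.ne_zero i
    apply this
    ext j
    exact congrFun h0 j
  have hc : ∀ i, Real.cos (Real.arccos (H.eigenvalues i)) = H.eigenvalues i := fun i =>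
    Real.cos_arccos (abs_le.1 (hμ i)).1 (abs_le.1 (hμ i)).2
  set θ : V → ℝ := fun i => Real.arccos (H.eigenvalues i)
  have hmul : ∀ f g : V → ℝ, (U * diagonal f * Uᴴ) * (U * diagonal g * Uᴴ) =
      U * diagonal (fun i => f i * g i) * Uᴴ := by
    intro f g
    calc _ = U * diagonal f * (Uᴴ * U) * diagonal g * Uᴴ := by simp only [Matrix.mul_assoc]
      _ = _ := by rw [h2, Matrix.mul_one, Matrix.mul_assoc U, diagonal_mul_diagonal]
  refine ⟨fun k => U * diagonal (fun i => Real.cos (k * θ i)) * Uᴴ, ?_, ?_, ?_, ?_, ?_⟩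
  · simpa using h1
  · simp only [Int.cast_one, one_mul]
    rw [hQ]; congr 3; funext i; exact hc i
  · intro k
    simp
  · intro k
    rw [hQ, hmul, ← Matrix.add_mul, ← Matrix.mul_add, diagonal_add, ← Matrix.smul_mul,
      ← Matrix.mul_smul, ← diagonal_smul]
    congr 3
    funext i
    simp only [Pi.smul_apply, smul_eq_mul, Int.cast_add, Int.cast_sub, Int.cast_one,
      add_mul, sub_mul, one_mul, Real.cos_add, Real.cos_sub]
    rw [← hc i]; ring
  · intro k x
    have e : ∑ y, ((U * diagonal (fun i => Real.cos (k * θ i)) * Uᴴ) x y)^2 =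
        ((U * diagonal (fun i => Real.cos (k * θ i)) * Uᴴ) *
          (U * diagonal (fun i => Real.cos (k * θ i)) * Uᴴ)) x x := by
      rw [Matrix.mul_apply]
      refine Finset.sum_congr rfl fun y _ => ?_
      rw [sq]
      congr 1
      have hh : (U * diagonal (fun i => Real.cos (k * θ i)) * Uᴴ)ᴴ =
          U * diagonal (fun i => Real.cos (k * θ i)) * Uᴴ := by
        simp [Matrix.conjTranspose_mul, Matrix.mul_assoc, Matrix.diagonal_conjTranspose]
      conv_rhs => rw [← hh]
      simp only [Matrix.conjTranspose_apply, star_trivial]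
    rw [e, hmul]
    have e1 : ∑ i, U x i * U x i = 1 := by
      have := congrFun (congrFun h1 x) x
      simpa [Matrix.mul_apply] using this
    rw [← e1, Matrix.mul_apply]
    refine Finset.sum_le_sum fun i _ => ?_
    simp only [Matrix.mul_diagonal, Matrix.conjTranspose_apply, star_trivial]
    have := Real.cos_sq_le_one (k * θ i)
    nlinarith [mul_self_nonneg (U x i)]

/-- finite propagation speed -/
lemma K_zero (hconn : G.Connected) (K : ℤ → Matrix V V ℝ) (h0 : K 0 = 1) (h1 : K 1 = Q G)
    (hneg : ∀ k, K (-k) = K k)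
    (hrec : ∀ k, Q G * K k = (2:ℝ)⁻¹ • (K (k+1) + K (k-1))) (k : ℤ) (x y : V)
    (hk : |k| < G.dist x y) : K k x y = 0 := by
  have main : ∀ m : ℕ, (∀ x y, m < G.dist x y → K m x y = 0) ∧
      (∀ x y, m + 1 < G.dist x y → K (m+1) x y = 0) := by
    intro m
    induction m with
    | zero =>
      constructor
      · intro x y h
        have : x ≠ y := by rintro rfl; simp at h
        simp [h0, Matrix.one_apply, this]
      · intro x y h
        have : ¬ G.Adj x y := by
          intro hA
          rw [SimpleGraph.dist_eq_one_iff_adj.2 hA] at h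
          omega
        simp [h1, Q, this]
    | succ m ih =>
      refine ⟨fun x y h => by exact_mod_cast ih.2 x y h, fun x y h => ?_⟩
      have e := congrFun (congrFun (hrec (m+1)) x) y
      have z : (Q G * K (m+1)) x y = 0 := by
        rw [Matrix.mul_apply]
        refine Finset.sum_eq_zero fun z _ => ?_
        by_cases hA : G.Adj x z
        · have t := hconn.dist_triangle (u := x) (v := z) (w := y)
          rw [SimpleGraph.dist_eq_one_iff_adj.2 hA] at t
          rw [ih.2 z y (by omega), mul_zero]
        · simp [Q, hA]
      rw [z] at e
      have e2 : K ((m:ℤ)+1-1) x y = 0 := by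
        rw [add_sub_cancel_right]; exact ih.1 x y (by omega)
      simp only [Matrix.smul_apply, Matrix.add_apply, e2, smul_eq_mul] at e
      push_cast
      linarith
  have : K k x y = K (k.natAbs : ℤ) x y := by
    rcases Int.natAbs_eq k with h | h
    · rw [← h]
    · conv_lhs => rw [h, hneg]
  rw [this]
  exact (main k.natAbs).1 x y (by rw [Int.abs_eq_natAbs] at hk; omega)

lemma exp_moment (hconn : G.Connected) (hd : ∀ a, 0 < G.degree a) (l : ℝ) (hl : 0 ≤ l) (x : V)
    (t : ℕ) : ∑ y, ((P G)^t) x y * Real.exp (l * G.dist x y) ≤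
      2 * Fintype.card V * Real.cosh l ^ t := by
  obtain ⟨K, h0, h1, hneg, hrec, hK⟩ := exists_K G hd
  set w : V → ℝ := fun y => (Real.sqrt (G.degree x))⁻¹ * Real.sqrt (G.degree y) *
    Real.exp (l * G.dist x y) with hw
  have hn0 : (0:ℝ) ≤ Fintype.card V := by positivity
  have hd1 : (1:ℝ) ≤ G.degree x := by exact_mod_cast hd x
  have base : ∀ k : ℤ, ∑ y, K k x y * w y ≤ 2 * Fintype.card V * Real.cosh (l * k) := by
    intro k
    have hA : ∑ y, |K k x y| * ((Real.sqrt (G.degree x))⁻¹ * Real.sqrt (G.degree y)) ≤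
        Fintype.card V := by
      refine abs_le_of_sq_le_sq' ?_ hn0 |>.2
      refine (Finset.sum_mul_sq_le_sq_mul_sq _ _ _).trans ?_
      have b1 : ∑ y, |K k x y| ^ 2 ≤ 1 := by simpa only [sq_abs] using hK k x
      have b2 : ∑ y, ((Real.sqrt (G.degree x))⁻¹ * Real.sqrt (G.degree y)) ^ 2 ≤
          (Fintype.card V : ℝ) ^ 2 := by
        calc _ ≤ ∑ y : V, (Fintype.card V : ℝ) := by
              refine Finset.sum_le_sum fun y _ => ?_
              rw [mul_pow, inv_pow, Real.sq_sqrt (by positivity), Real.sq_sqrt (by positivity)]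
              have : (G.degree y : ℝ) ≤ Fintype.card V := by
                exact_mod_cast (G.degree_lt_card_verts y).le
              have i1 : (G.degree x : ℝ)⁻¹ ≤ 1 := inv_le_one_of_one_le₀ hd1
              calc _ ≤ 1 * (G.degree y : ℝ) := by gcongr
                _ ≤ _ := by linarith
          _ = _ := by simp [sq]
      calc _ ≤ 1 * (Fintype.card V : ℝ) ^ 2 := by
            refine mul_le_mul b1 b2 (Finset.sum_nonneg fun _ _ => sq_nonneg _) zero_le_one
        _ = _ := one_mul _
    have hc : Real.exp (l * |(k:ℝ)|) ≤ 2 * Real.cosh (l * k) := by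
      rw [← Real.cosh_abs (l * k), abs_mul, abs_of_nonneg hl, Real.cosh_eq]
      have := Real.exp_pos (-(l * |(k:ℝ)|))
      linarith
    calc ∑ y, K k x y * w y ≤ ∑ y, (|K k x y| *
          ((Real.sqrt (G.degree x))⁻¹ * Real.sqrt (G.degree y))) * Real.exp (l * |(k:ℝ)|) := by
          refine Finset.sum_le_sum fun y _ => ?_
          by_cases hy : |k| < G.dist x y
          · rw [K_zero G hconn K h0 h1 hneg hrec k x y hy]; simp
          · have hy' : (G.dist x y : ℝ) ≤ |(k:ℝ)| := by
              push Not at hy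
              exact_mod_cast hy
            rw [hw, ← mul_assoc]
            gcongr
            exact le_abs_self _
      _ ≤ Fintype.card V * Real.exp (l * |(k:ℝ)|) := by
          rw [← Finset.sum_mul]; gcongr
      _ ≤ Fintype.card V * (2 * Real.cosh (l * k)) := by gcongr
      _ = _ := by ring
  have ind : ∀ t : ℕ, ∀ k : ℤ, ∑ y, ((Q G)^t * K k) x y * w y ≤
      2 * Fintype.card V * Real.cosh (l * k) * Real.cosh l ^ t := by
    intro t
    induction t with
    | zero => intro k; simpa using base k
    | succ t ih =>
      intro k
      have e : (Q G)^(t+1) * K k = (2:ℝ)⁻¹ • ((Q G)^t * K (k+1) + (Q G)^t * K (k-1)) := by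
        rw [pow_succ, Matrix.mul_assoc, hrec, Matrix.mul_smul, Matrix.mul_add]
      have e2 : ∑ y, ((Q G)^(t+1) * K k) x y * w y =
          2⁻¹ * (∑ y, ((Q G)^t * K (k+1)) x y * w y + ∑ y, ((Q G)^t * K (k-1)) x y * w y) := by
        rw [e, ← Finset.sum_add_distrib, Finset.mul_sum]
        refine Finset.sum_congr rfl fun y _ => ?_
        simp only [Matrix.smul_apply, Matrix.add_apply, smul_eq_mul]
        ring
      rw [e2]
      have i1 := ih (k+1)
      have i2 := ih (k-1)
      push_cast at i1 i2
      rw [mul_add, mul_one, Real.cosh_add] at i1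
      rw [mul_sub, mul_one, Real.cosh_sub] at i2
      rw [pow_succ]
      nlinarith
  have := ind t 0
  rw [h0] at this
  simp only [Matrix.mul_one, Int.cast_zero, mul_zero, Real.cosh_zero, mul_one] at this
  refine le_trans (le_of_eq ?_) this
  refine Finset.sum_congr rfl fun y _ => ?_
  rw [P_pow G hd, hw]
  ring

end VC

/-- If `t ≤ n`, the expected distance covered in time `t` by a simple random walk on a
connected simple graph on `n ≥ 2` vertices is at most `1 + √n·√(1 + 5 log n)`.
(This bounds `E[D₁]`, since the cop's Stage-1 travel time is at most `diam(G) ≤ n`.) -/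
theorem expected_distance_bound_of_time_le {V : Type} [Fintype V] (G : SimpleGraph V) (n : ℕ)
    (hn : 2 ≤ n) (hcard : Fintype.card V = n) (hconn : G.Connected) (x0 : V) (t : ℕ)
    (ht : t ≤ n) :
    walkExp G t x0 (fun p => (G.dist x0 (p (Fin.last t)) : ℝ))
      ≤ 1 + Real.sqrt n * Real.sqrt (1 + 5 * Real.log n) := by
  have hnt : Nontrivial V := Fintype.one_lt_card_iff_nontrivial.1 (by omega)
  have hd : ∀ a, 0 < G.degree a := fun a => hconn.preconnected.degree_pos_of_nontrivial a
  have hnR : (2:ℝ) ≤ n := by exact_mod_cast hn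
  have hlog : Real.log 2 ≤ Real.log n := Real.log_le_log (by norm_num) hnR
  have hlog2 := Real.log_two_gt_d9
  have hlog2' := Real.log_two_lt_d9
  rw [VC.walkExp_eq G t x0 (fun y => (G.dist x0 y : ℝ)), ← Real.sqrt_mul (by positivity)]
  set L := 1 + 5 * Real.log n with hL
  have hLpos : 0 < L := by linarith
  set s := Real.sqrt (n * L) with hs
  have hspos : 0 < s := Real.sqrt_pos.2 (by positivity)
  have hs2 : s * s = n * L := Real.mul_self_sqrt (by positivity)
  set l := s / n with hl
  have hlpos : 0 < l := by positivity
  set C : ℝ := 2 * n * Real.exp (l ^ 2 / 2 * n) with hC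
  have hCpos : 0 < C := by positivity
  have hM : ∑ y, ((VC.P G)^t) x0 y * Real.exp (l * G.dist x0 y) ≤ C := by
    refine (VC.exp_moment G hconn hd l hlpos.le x0 t).trans ?_
    rw [hcard, hC]
    gcongr
    calc Real.cosh l ^ t ≤ Real.cosh l ^ n := pow_le_pow_right₀ (Real.one_le_cosh l) ht
      _ ≤ Real.exp (l ^ 2 / 2) ^ n := by
        gcongr
        exact Real.cosh_le_exp_half_sq l
      _ = _ := by rw [← Real.exp_nat_mul, mul_comm]
  have hlogC : Real.log C = Real.log 2 + Real.log n + l ^ 2 / 2 * n := by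
    rw [hC, Real.log_mul (by positivity) (by positivity),
      Real.log_mul (by positivity) (by positivity), Real.log_exp]
  have hpt : ∀ y, l * (G.dist x0 y : ℝ) ≤
      Real.log C - 1 + Real.exp (l * G.dist x0 y) / C := by
    intro y
    have := Real.add_one_le_exp (l * G.dist x0 y - Real.log C)
    rw [Real.exp_sub, Real.exp_log hCpos] at this
    linarith
  have hsum : l * ∑ y, ((VC.P G)^t) x0 y * (G.dist x0 y : ℝ) ≤ Real.log C := by
    calc l * ∑ y, ((VC.P G)^t) x0 y * (G.dist x0 y : ℝ)
        = ∑ y, ((VC.P G)^t) x0 y * (l * (G.dist x0 y : ℝ)) := by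
          rw [Finset.mul_sum]; exact Finset.sum_congr rfl fun _ _ => by ring
      _ ≤ ∑ y, ((VC.P G)^t) x0 y * (Real.log C - 1 + Real.exp (l * G.dist x0 y) / C) :=
          Finset.sum_le_sum fun y _ =>
            mul_le_mul_of_nonneg_left (hpt y) (VC.P_pow_nonneg G t x0 y)
      _ = (Real.log C - 1) * ∑ y, ((VC.P G)^t) x0 y +
          (∑ y, ((VC.P G)^t) x0 y * Real.exp (l * G.dist x0 y)) / C := by
          rw [Finset.mul_sum, Finset.sum_div, ← Finset.sum_add_distrib]
          exact Finset.sum_congr rfl fun _ _ => by ring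
      _ ≤ (Real.log C - 1) * 1 + 1 := by
          rw [VC.P_pow_sum G hd]
          have := (div_le_one hCpos).2 hM
          linarith
      _ = _ := by ring
  have hls : l * s = L := by
    rw [hl, div_mul_eq_mul_div, hs2]; field_simp
  have hl2 : l ^ 2 * n = L := by
    rw [← hls, hl]; field_simp
  have : l * ∑ y, ((VC.P G)^t) x0 y * (G.dist x0 y : ℝ) ≤ l * s := by
    rw [hls]; refine hsum.trans ?_
    rw [hlogC]; linarith
  have := le_of_mul_le_mul_left this hlpos
  linarith
end

section
/- Let G be a finite connected simple graph on n ≥ 2 vertices, let (x_0, x_1, …) be a simple random walk on G started at a vertex x_0, and let S be an ℕ-valued random variable independent of the walk with E[S] ≤ 1 + √n·√(1 + 5 log n). Then E[ d(x_0, x_S) ] ≤ 1 + √(1 + 5 log n) · √( 1 + √n·√(1 + 5 log n) ). (This is the bound E[D₂] on the distance the drunk travels during the second stage of the cop's strategy, obtained from the key lemma together with Jensen's inequality; it is O(n^{1/4}(log n)^{3/4}).) -/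
open scoped Classical

open Polynomial in
theorem cheb_pell (n : ℕ) : (Chebyshev.T ℝ ((n : ℤ) + 1)) ^ 2
    + (1 - X ^ 2) * (Chebyshev.U ℝ (n : ℤ)) ^ 2 = 1 := by
  induction n with
  | zero => simp
  | succ n ih =>
    have h1 := Chebyshev.T_eq_X_mul_T_sub_pol_U ℝ (n : ℤ)
    have h2 := Chebyshev.U_eq_X_mul_U_add_T ℝ (n : ℤ)
    push_cast
    rw [show ((n : ℤ) + 1 + 1) = n + 2 by ring, h1, h2]
    linear_combination ih

/-- symmetrised transition matrix -/
noncomputable def symA {V : Type} [Fintype V] (G : SimpleGraph V) : Matrix V V ℝ :=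
  Matrix.of fun a b => if G.Adj a b then (√(G.degree a : ℝ))⁻¹ * (√(G.degree b : ℝ))⁻¹ else 0

theorem symA_symm {V : Type} [Fintype V] (G : SimpleGraph V) : (symA G).IsSymm := by
  ext a b
  simp [symA, Matrix.transpose_apply, G.adj_comm a b, mul_comm]

theorem symA_contr {V : Type} [Fintype V] (G : SimpleGraph V) (v : V → ℝ) :
    ∑ x, (∑ y, symA G x y * v y) ^ 2 ≤ ∑ y, v y ^ 2 := by
  have h1 : ∀ x, (∑ y, symA G x y * v y) ^ 2
      ≤ ∑ y, if G.Adj x y then (G.degree y : ℝ)⁻¹ * v y ^ 2 else 0 := by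
    intro x
    have e : ∀ y, symA G x y * v y =
        (if G.Adj x y then (√(G.degree x : ℝ))⁻¹ else 0) *
        (if G.Adj x y then (√(G.degree y : ℝ))⁻¹ * v y else 0) := by
      intro y
      by_cases h : G.Adj x y <;> simp [symA, h, mul_assoc]
    simp_rw [e]
    refine (Finset.sum_mul_sq_le_sq_mul_sq _ _ _).trans ?_
    have f1 : ∑ y, (if G.Adj x y then (√(G.degree x : ℝ))⁻¹ else 0) ^ 2 ≤ 1 := by
      simp_rw [ite_pow, inv_pow, Real.sq_sqrt (Nat.cast_nonneg _)]
      simp only [ne_eq, OfNat.ofNat_ne_zero, not_false_eq_true, zero_pow]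
      rw [← Finset.sum_filter, Finset.sum_const, nsmul_eq_mul, ← G.neighborFinset_eq_filter,
        G.card_neighborFinset_eq_degree]
      exact mul_inv_le_one
    have f2 : ∑ y, (if G.Adj x y then (√(G.degree y : ℝ))⁻¹ * v y else 0) ^ 2
        = ∑ y, if G.Adj x y then (G.degree y : ℝ)⁻¹ * v y ^ 2 else 0 := by
      refine Finset.sum_congr rfl fun y _ => ?_
      by_cases h : G.Adj x y <;> simp [h, mul_pow, Real.sq_sqrt]
    rw [f2]
    refine mul_le_of_le_one_left (Finset.sum_nonneg fun y _ => ?_) f1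
    split_ifs <;> positivity
  refine (Finset.sum_le_sum fun x _ => h1 x).trans ?_
  rw [Finset.sum_comm]
  refine Finset.sum_le_sum fun y _ => ?_
  simp_rw [G.adj_comm _ y]
  rw [← Finset.sum_filter, Finset.sum_const, nsmul_eq_mul, ← G.neighborFinset_eq_filter,
        G.card_neighborFinset_eq_degree, ← mul_assoc]
  exact mul_le_of_le_one_left (sq_nonneg _) mul_inv_le_one

theorem aeval_symm {V : Type} [Fintype V] (A : Matrix V V ℝ) (hA : A.IsSymm)
    (p : Polynomial ℝ) : (Polynomial.aeval A p).IsSymm := by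
  induction p using Polynomial.induction_on' with
  | add p q hp hq => rw [map_add]; exact hp.add hq
  | monomial n a =>
    rw [Polynomial.aeval_monomial, Algebra.algebraMap_eq_smul_one, smul_mul_assoc, one_mul]
    exact (hA.pow n).smul a

open Polynomial in
theorem cheb_entry_nat {V : Type} [Fintype V] (G : SimpleGraph V) (n : ℕ) (x y : V) :
    |(aeval (symA G) (Chebyshev.T ℝ (n : ℤ))) x y| ≤ 1 := by
  rcases n with _ | n
  · simp [Matrix.one_apply]; split_ifs <;> simp
  set A := symA G with hA
  set M := aeval A (Chebyshev.T ℝ ((n : ℤ) + 1)) with hM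
  set N := aeval A (Chebyshev.U ℝ (n : ℤ)) with hN
  have hAs : A.IsSymm := symA_symm G
  have hMs : M.IsSymm := aeval_symm A hAs _
  have hNs : N.IsSymm := aeval_symm A hAs _
  have hANs : (A * N).IsSymm := by
    have := aeval_symm A hAs (X * Chebyshev.U ℝ (n : ℤ))
    simpa [← hN] using this
  have key : M * M + N * N = 1 + (A * N) * (A * N) := by
    have h : (Chebyshev.T ℝ ((n : ℤ) + 1)) * (Chebyshev.T ℝ ((n : ℤ) + 1))
      + (Chebyshev.U ℝ (n : ℤ)) * (Chebyshev.U ℝ (n : ℤ))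
      = 1 + (X * Chebyshev.U ℝ (n : ℤ)) * (X * Chebyshev.U ℝ (n : ℤ)) := by
      linear_combination cheb_pell n
    simpa [← hN, ← hM] using congrArg (aeval A) h
  have sq : ∀ B : Matrix V V ℝ, B.IsSymm → (B * B) y y = ∑ z, (B z y) ^ 2 := by
    intro B hB
    rw [Matrix.mul_apply]
    refine Finset.sum_congr rfl fun z _ => ?_
    rw [hB.apply z y, _root_.sq]
  have k2 := congrFun (congrFun key y) y
  rw [Matrix.add_apply, Matrix.add_apply, sq M hMs, sq N hNs, sq _ hANs, Matrix.one_apply_eq] at k2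
  have k3 := symA_contr G (fun z => N z y)
  have k4 : ∑ z, ((A * N) z y) ^ 2 ≤ ∑ z, N z y ^ 2 := by
    simpa only [Matrix.mul_apply] using k3
  have k5 : (M x y) ^ 2 ≤ ∑ z, (M z y) ^ 2 :=
    Finset.single_le_sum (f := fun z => (M z y) ^ 2) (fun z _ => sq_nonneg _) (Finset.mem_univ x)
  have : (M x y) ^ 2 ≤ 1 := by linarith
  push_cast
  exact (sq_le_one_iff_abs_le_one _).1 this

open Polynomial in
theorem cheb_zero_nat {V : Type} [Fintype V] (G : SimpleGraph V) (hconn : G.Connected) (n : ℕ) :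
    ∀ x y : V, n < G.dist x y → (aeval (symA G) (Chebyshev.T ℝ (n : ℤ))) x y = 0 := by
  have step : ∀ (B : Matrix V V ℝ) (k : ℕ), (∀ x y, k < G.dist x y → B x y = 0) →
      ∀ x y, k + 1 < G.dist x y → (symA G * B) x y = 0 := by
    intro B k hB x y h
    rw [Matrix.mul_apply]
    refine Finset.sum_eq_zero fun z _ => ?_
    by_cases hz : G.Adj x z
    · rw [hB z y, mul_zero]
      have h1 := hconn.dist_triangle (u := x) (v := z) (w := y)
      have h2 : G.dist x z = 1 := SimpleGraph.dist_eq_one_iff_adj.2 hz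
      omega
    · simp [symA, hz]
  have h0 : ∀ x y : V, 0 < G.dist x y → (1 : Matrix V V ℝ) x y = 0 := by
    intro x y h
    refine Matrix.one_apply_ne ?_
    rintro rfl
    simp at h
  induction n using Nat.strong_induction_on with
  | _ n ih =>
    rcases n with _ | _ | n
    · simpa using h0
    · simpa using step 1 0 h0
    · intro x y h
      push_cast
      rw [show ((n : ℤ) + 1 + 1) = n + 2 by ring, Chebyshev.T_add_two, map_sub, mul_assoc, map_mul,
        map_mul, aeval_X, Matrix.sub_apply, ih n (by omega) x y (by omega)]
      have := step _ (n + 1) (ih (n + 1) (by omega)) x y h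
      push_cast at this
      rw [show (aeval (symA G)) (2 : ℝ[X]) = (2 : Matrix V V ℝ) from map_ofNat _ 2, two_mul,
        Matrix.add_apply, this]
      simp

open Polynomial in
theorem carne_aux {V : Type} [Fintype V] (G : SimpleGraph V) (hconn : G.Connected) (x y : V)
    (l : ℝ) (t : ℕ) : ∀ k : ℤ, |(symA G ^ t * aeval (symA G) (Chebyshev.T ℝ k)) x y| ≤
      Real.cosh l ^ t * Real.cosh (l * k) / Real.cosh (l * G.dist x y) := by
  induction t with
  | zero =>
    intro k
    rw [pow_zero, pow_zero, one_mul, one_mul, ← Chebyshev.T_natAbs]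
    have hc := Real.cosh_pos (l * G.dist x y)
    have hc2 := Real.cosh_pos (l * k)
    by_cases h : k.natAbs < G.dist x y
    · rw [cheb_zero_nat G hconn _ x y h, abs_zero]
      positivity
    · refine (cheb_entry_nat G _ x y).trans ?_
      rw [one_le_div hc, Real.cosh_le_cosh, abs_mul, abs_mul]
      refine mul_le_mul_of_nonneg_left ?_ (abs_nonneg _)
      rw [Nat.abs_cast, ← Int.cast_abs, Int.abs_eq_natAbs]
      have h' : ((G.dist x y : ℤ)) ≤ (k.natAbs : ℤ) := by exact_mod_cast not_lt.1 h
      exact_mod_cast h'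
  | succ t ih =>
    intro k
    have e : symA G ^ (t + 1) * aeval (symA G) (Chebyshev.T ℝ k) =
        (1 / 2 : ℝ) • (symA G ^ t * aeval (symA G) (Chebyshev.T ℝ (k + 1)) +
          symA G ^ t * aeval (symA G) (Chebyshev.T ℝ (k - 1))) := by
      have h : X * Chebyshev.T ℝ k = (1 / 2 : ℝ) • (Chebyshev.T ℝ (k + 1) + Chebyshev.T ℝ (k - 1)) := by
        have h2 : Chebyshev.T ℝ (k + 1) + Chebyshev.T ℝ (k - 1) = (2 : ℝ) • (X * Chebyshev.T ℝ k) := by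
          rw [Chebyshev.T_add_one, two_smul]; ring
        rw [h2, smul_smul]; norm_num
      have h3 := congrArg (aeval (symA G)) h
      rw [map_mul, aeval_X, map_smul, map_add] at h3
      rw [pow_succ, mul_assoc, h3, mul_smul_comm, mul_add]
    rw [e, Matrix.smul_apply, Matrix.add_apply, smul_eq_mul, abs_mul]
    have h1 := ih (k + 1)
    have h2 := ih (k - 1)
    have h3 := abs_add_le ((symA G ^ t * aeval (symA G) (Chebyshev.T ℝ (k + 1))) x y)
      ((symA G ^ t * aeval (symA G) (Chebyshev.T ℝ (k - 1))) x y)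
    have h4 : Real.cosh l ^ (t+1) * Real.cosh (l * k) / Real.cosh (l * G.dist x y) =
      1 / 2 * (Real.cosh l ^ t * Real.cosh (l * ((k + 1 : ℤ) : ℝ)) / Real.cosh (l * G.dist x y) +
        Real.cosh l ^ t * Real.cosh (l * ((k - 1 : ℤ) : ℝ)) / Real.cosh (l * G.dist x y)) := by
      push_cast
      rw [mul_add l, mul_sub l, mul_one, Real.cosh_add, Real.cosh_sub]
      ring
    rw [h4, abs_of_nonneg (by norm_num : (0 : ℝ) ≤ 1 / 2)]
    linarith

theorem carne {V : Type} [Fintype V] (G : SimpleGraph V) (hconn : G.Connected) (x y : V)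
    (t : ℕ) (ht : 0 < t) :
    (symA G ^ t) x y * Real.exp ((G.dist x y : ℝ) ^ 2 / (2 * t)) ≤ 2 := by
  set d : ℝ := (G.dist x y : ℝ) with hd
  have ht' : (0 : ℝ) < t := by exact_mod_cast ht
  have h := carne_aux G hconn x y (d / t) t 0
  simp only [Polynomial.Chebyshev.T_zero, map_one, mul_one, Int.cast_zero, mul_zero,
    Real.cosh_zero] at h
  have h1 := (le_abs_self _).trans h
  have h2 : Real.cosh (d / t) ^ t ≤ Real.exp (d ^ 2 / (2 * t)) := by
    refine (pow_le_pow_left₀ (Real.cosh_pos _).le (Real.cosh_le_exp_half_sq _) t).trans ?_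
    rw [← Real.exp_nat_mul]
    refine le_of_eq (congrArg _ ?_)
    field_simp
  have h3 : Real.exp (d ^ 2 / (2 * t)) * Real.exp (d ^ 2 / (2 * t)) ≤
      2 * Real.cosh (d / t * d) := by
    rw [← Real.exp_add, Real.cosh_eq]
    have : d ^ 2 / (2 * t) + d ^ 2 / (2 * t) = d / t * d := by field_simp; ring
    rw [this]
    have := Real.exp_pos (-(d / t * d))
    linarith
  have hc := Real.cosh_pos (d / t * d)
  have he := Real.exp_pos (d ^ 2 / (2 * t))
  rw [le_div_iff₀ hc] at h1
  refine le_of_mul_le_mul_right ?_ hc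
  nlinarith

theorem stepPow_eq {V : Type} [Fintype V] (G : SimpleGraph V) (hdeg : ∀ v, 0 < G.degree v) (t : ℕ) :
    ∀ x y, ((Matrix.of (stepWt G)) ^ t) x y =
      (√(G.degree x : ℝ))⁻¹ * (symA G ^ t) x y * √(G.degree y : ℝ) := by
  have hs : ∀ v, √(G.degree v : ℝ) ≠ 0 := fun v =>
    (Real.sqrt_pos.2 (by exact_mod_cast hdeg v)).ne'
  induction t with
  | zero =>
    intro x y
    by_cases h : x = y
    · subst h; simp [hs x]
    · simp [Matrix.one_apply_ne h]
  | succ t ih =>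
    intro x y
    rw [pow_succ, pow_succ, Matrix.mul_apply, Matrix.mul_apply, Finset.mul_sum, Finset.sum_mul]
    refine Finset.sum_congr rfl fun z _ => ?_
    rw [ih]
    by_cases h : G.Adj z y
    · simp only [Matrix.of_apply, stepWt, symA, h, if_true]
      have e : ((G.degree z : ℝ))⁻¹ = (√(G.degree z : ℝ))⁻¹ * (√(G.degree z : ℝ))⁻¹ := by
        rw [← mul_inv, Real.mul_self_sqrt (Nat.cast_nonneg _)]
      rw [e]
      have h1 := hs z
      have h2 := hs y
      field_simp
    · simp [stepWt, symA, h]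

theorem walkExp_eq {V : Type} [Fintype V] (G : SimpleGraph V) (x0 : V) (t : ℕ) :
    ∀ g : V → ℝ, walkExp G t x0 (fun p => g (p (Fin.last t))) =
      ∑ y, ((Matrix.of (stepWt G)) ^ t) x0 y * g y := by
  induction t with
  | zero =>
    intro g
    unfold walkExp
    rw [← (Equiv.funUnique (Fin 1) V).symm.sum_comp]
    simp [Matrix.one_apply]
  | succ t ih =>
    intro g
    have h := ih (fun z => ∑ y, stepWt G z y * g y)
    have e : walkExp G (t + 1) x0 (fun p => g (p (Fin.last (t + 1)))) =
        walkExp G t x0 (fun p => ∑ y, stepWt G (p (Fin.last t)) y * g y) := by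
      unfold walkExp
      rw [← (Fin.snocEquiv (fun _ : Fin (t + 2) => V)).sum_comp, Fintype.sum_prod_type,
        Finset.sum_comm]
      refine Finset.sum_congr rfl fun p _ => ?_
      rw [Finset.mul_sum]
      refine Finset.sum_congr rfl fun y _ => ?_
      have e0 : (Fin.snoc p y : Fin (t + 2) → V) 0 = p 0 := by
        rw [← Fin.castSucc_zero, Fin.snoc_castSucc]
      have e1 : ∏ i : Fin (t + 1), stepWt G ((Fin.snoc p y : Fin (t + 2) → V) i.castSucc)
          ((Fin.snoc p y : Fin (t + 2) → V) i.succ) =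
          (∏ i : Fin t, stepWt G (p i.castSucc) (p i.succ)) * stepWt G (p (Fin.last t)) y := by
        rw [Fin.prod_univ_castSucc]
        simp only [Fin.succ_castSucc, Fin.snoc_castSucc, Fin.succ_last, Fin.snoc_last]
      have e2 : (Fin.snoc p y : Fin (t + 2) → V) (Fin.last (t + 1)) = y := Fin.snoc_last _ _
      change (if (Fin.snoc p y : Fin (t + 2) → V) 0 = x0 then
        ∏ i : Fin (t + 1), stepWt G ((Fin.snoc p y : Fin (t + 2) → V) i.castSucc)
          ((Fin.snoc p y : Fin (t + 2) → V) i.succ) else 0) *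
          g ((Fin.snoc p y : Fin (t + 2) → V) (Fin.last (t + 1))) = _
      rw [e0, e1, e2]
      split_ifs <;> ring
    rw [e, h, pow_succ]
    simp_rw [Matrix.mul_apply, Finset.mul_sum, Finset.sum_mul]
    rw [Finset.sum_comm]
    simp [mul_assoc]

theorem stepPow_nonneg {V : Type} [Fintype V] (G : SimpleGraph V) (t : ℕ) :
    ∀ x y, 0 ≤ ((Matrix.of (stepWt G)) ^ t) x y := by
  induction t with
  | zero => intro x y; simp [Matrix.one_apply]; split_ifs <;> simp
  | succ t ih =>
    intro x y
    rw [pow_succ, Matrix.mul_apply]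
    refine Finset.sum_nonneg fun z _ => mul_nonneg (ih _ _) ?_
    simp only [Matrix.of_apply, stepWt]
    split_ifs <;> positivity

theorem stepPow_sum {V : Type} [Fintype V] (G : SimpleGraph V) (hdeg : ∀ v, 0 < G.degree v) (t : ℕ) :
    ∀ x, ∑ y, ((Matrix.of (stepWt G)) ^ t) x y = 1 := by
  induction t with
  | zero => intro x; simp [Matrix.one_apply]
  | succ t ih =>
    intro x
    simp_rw [pow_succ, Matrix.mul_apply]
    rw [Finset.sum_comm]
    simp_rw [← Finset.mul_sum]
    have : ∀ z, ∑ y, Matrix.of (stepWt G) z y = 1 := by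
      intro z
      simp only [Matrix.of_apply, stepWt]
      rw [← Finset.sum_filter, Finset.sum_const, nsmul_eq_mul, ← G.neighborFinset_eq_filter,
        G.card_neighborFinset_eq_degree]
      exact mul_inv_cancel₀ (by exact_mod_cast (hdeg z).ne')
    simp_rw [this, mul_one, ih]

/-- second moment bound -/
theorem second_moment {V : Type} [Fintype V] (G : SimpleGraph V) (n : ℕ)
    (hn : 2 ≤ n) (hcard : Fintype.card V = n) (hconn : G.Connected)
    (hdeg : ∀ v, 0 < G.degree v) (x : V) (t : ℕ) :
    ∑ y, ((Matrix.of (stepWt G)) ^ t) x y * (G.dist x y : ℝ) ^ 2 ≤ t * (1 + 5 * Real.log n) := by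
  rcases Nat.eq_zero_or_pos t with rfl | ht
  · simp [Matrix.one_apply]
  have ht' : (0 : ℝ) < t := by exact_mod_cast ht
  have hn' : (2 : ℝ) ≤ n := by exact_mod_cast hn
  set p : V → ℝ := fun y => ((Matrix.of (stepWt G)) ^ t) x y with hp
  set u : V → ℝ := fun y => (G.dist x y : ℝ) ^ 2 / (2 * t) with hu
  have hp0 : ∀ y, 0 ≤ p y := fun y => stepPow_nonneg G t x y
  have hp1 : ∑ y, p y = 1 := stepPow_sum G hdeg t x
  have hE : ∑ y, p y * Real.exp (u y) ≤ 2 * n * √n := by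
    have : ∀ y, p y * Real.exp (u y) ≤ 2 * √n := by
      intro y
      have h1 := carne G hconn x y t ht
      have h2 : (√(G.degree x : ℝ))⁻¹ ≤ 1 := by
        apply inv_le_one_of_one_le₀
        rw [Real.one_le_sqrt]
        exact_mod_cast hdeg x
      have h3 : √(G.degree y : ℝ) ≤ √n := by
        apply Real.sqrt_le_sqrt
        rw [← hcard]
        exact_mod_cast (G.degree_lt_card_verts y).le
      have h4 : p y * Real.exp (u y) = ((√(G.degree x : ℝ))⁻¹ * √(G.degree y : ℝ)) *
          ((symA G ^ t) x y * Real.exp ((G.dist x y : ℝ) ^ 2 / (2 * t))) := by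
        simp only [hp, hu, stepPow_eq G hdeg t x y]; ring
      have h5 : (√(G.degree x : ℝ))⁻¹ * √(G.degree y : ℝ) ≤ √n :=
        (mul_le_of_le_one_left (Real.sqrt_nonneg _) h2).trans h3
      rw [h4]
      have h6 : 0 ≤ (√(G.degree x : ℝ))⁻¹ * √(G.degree y : ℝ) := by positivity
      nlinarith
    refine (Finset.sum_le_sum fun y _ => this y).trans ?_
    rw [Finset.sum_const, Finset.card_univ, hcard, nsmul_eq_mul]
    exact le_of_eq (by ring)
  set L := Real.log (2 * n * √n) with hL
  have hpos : (0 : ℝ) < 2 * n * √n := by positivity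
  have hb : ∀ y, p y * u y ≤ p y * (L - 1) + (2 * n * √n)⁻¹ * (p y * Real.exp (u y)) := by
    intro y
    have h := Real.add_one_le_exp (u y - L)
    rw [Real.exp_sub, hL, Real.exp_log hpos, ← hL] at h
    have := mul_le_mul_of_nonneg_left h (hp0 y)
    rw [div_eq_mul_inv] at this
    linarith
  have hs : ∑ y, p y * u y ≤ L := by
    refine (Finset.sum_le_sum fun y _ => hb y).trans ?_
    rw [Finset.sum_add_distrib, ← Finset.sum_mul, hp1, ← Finset.mul_sum]
    have := mul_le_mul_of_nonneg_left hE (inv_nonneg.2 hpos.le)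
    rw [inv_mul_cancel₀ hpos.ne'] at this
    linarith
  have hLe : 2 * L ≤ 1 + 5 * Real.log n := by
    have : L = Real.log 2 + Real.log n + Real.log n / 2 := by
      rw [hL, Real.log_mul (by positivity) (by positivity), Real.log_mul (by positivity)
        (by positivity), Real.log_sqrt (by positivity)]
    have h2 : Real.log 2 ≤ Real.log n := Real.log_le_log (by norm_num) hn'
    linarith
  have e : ∑ y, p y * (G.dist x y : ℝ) ^ 2 = t * (2 * ∑ y, p y * u y) := by
    rw [Finset.mul_sum, Finset.mul_sum]
    refine Finset.sum_congr rfl fun y _ => ?_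
    simp only [hu]
    field_simp
  rw [e]
  exact mul_le_mul_of_nonneg_left (by linarith) ht'.le

/-- **Bound on `E[D₂]`.** If `S` is an `ℕ`-valued random variable (with distribution `μ`)
independent of the simple random walk on a connected simple graph `G` on `n ≥ 2` vertices,
and `E[S] ≤ 1 + √n·√(1 + 5 log n)`, then
`E[d(x_0, x_S)] ≤ 1 + √(1 + 5 log n)·√(1 + √n·√(1 + 5 log n))`.
Independence is expressed by writing `E[d(x_0,x_S)]` as the `μ`-mixture of the fixed-time
expectations `E[d(x_0,x_s)]`. -/
theorem expected_distance_at_random_time {V : Type} [Fintype V] (G : SimpleGraph V) (n : ℕ)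
    (hn : 2 ≤ n) (hcard : Fintype.card V = n) (hconn : G.Connected) (x0 : V)
    (μ : ℕ → ℝ) (hμ0 : ∀ s, 0 ≤ μ s) (hμ1 : HasSum μ 1)
    (hmean_summable : Summable (fun s : ℕ => (s : ℝ) * μ s))
    (hmean : ∑' s : ℕ, (s : ℝ) * μ s ≤ 1 + Real.sqrt n * Real.sqrt (1 + 5 * Real.log n)) :
    ∑' s : ℕ, μ s * walkExp G s x0 (fun p => (G.dist x0 (p (Fin.last s)) : ℝ))
      ≤ 1 + Real.sqrt (1 + 5 * Real.log n) *
          Real.sqrt (1 + Real.sqrt n * Real.sqrt (1 + 5 * Real.log n)) := by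
  have : Nontrivial V := Fintype.one_lt_card_iff_nontrivial.1 (by omega)
  have hdeg : ∀ v, 0 < G.degree v := fun v => hconn.preconnected.degree_pos_of_nontrivial v
  set c : ℝ := 1 + 5 * Real.log n with hc
  set M : ℝ := 1 + Real.sqrt n * Real.sqrt c with hM
  have hn' : (2 : ℝ) ≤ n := by exact_mod_cast hn
  have hc1 : 0 < c := by
    have : 0 ≤ Real.log n := Real.log_nonneg (by linarith)
    positivity
  have hM1 : 0 < M := by positivity
  set R : ℝ := √c * √M with hR
  have hRpos : 0 < R := by positivity
  have hRsq : R * R = c * M := by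
    rw [hR, mul_mul_mul_comm, Real.mul_self_sqrt hc1.le, Real.mul_self_sqrt hM1.le]
  have hb : ∀ s : ℕ, walkExp G s x0 (fun p => (G.dist x0 (p (Fin.last s)) : ℝ)) ≤
      (c / R * s + R) / 2 := by
    intro s
    rw [walkExp_eq G x0 s (fun y => (G.dist x0 y : ℝ))]
    have h2 := second_moment G n hn hcard hconn hdeg x0 s
    have h3 : ∀ y, ((Matrix.of (stepWt G)) ^ s) x0 y * (G.dist x0 y : ℝ) ≤
        (((Matrix.of (stepWt G)) ^ s) x0 y * (G.dist x0 y : ℝ) ^ 2) * (1 / (2 * R)) +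
        ((Matrix.of (stepWt G)) ^ s) x0 y * (R / 2) := by
      intro y
      rw [mul_assoc, ← mul_add]
      refine mul_le_mul_of_nonneg_left ?_ (stepPow_nonneg G s x0 y)
      set d : ℝ := (G.dist x0 y : ℝ)
      have : d ^ 2 * (1 / (2 * R)) + R / 2 - d = (d - R) ^ 2 / (2 * R) := by
        field_simp; ring
      have h0 : 0 ≤ (d - R) ^ 2 / (2 * R) := by positivity
      linarith
    refine (Finset.sum_le_sum fun y _ => h3 y).trans ?_
    rw [Finset.sum_add_distrib, ← Finset.sum_mul, ← Finset.sum_mul, stepPow_sum G hdeg]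
    have h4 := mul_le_mul_of_nonneg_right h2 (by positivity : 0 ≤ 1 / (2 * R))
    have h5 : (s : ℝ) * c * (1 / (2 * R)) + 1 * (R / 2) = (c / R * s + R) / 2 := by
      field_simp
    linarith
  have h0 : ∀ s : ℕ, 0 ≤ walkExp G s x0 (fun p => (G.dist x0 (p (Fin.last s)) : ℝ)) := by
    intro s
    rw [walkExp_eq G x0 s (fun y => (G.dist x0 y : ℝ))]
    exact Finset.sum_nonneg fun y _ => mul_nonneg (stepPow_nonneg G s x0 y) (Nat.cast_nonneg _)
  have hsum : HasSum (fun s : ℕ => c / R / 2 * ((s : ℝ) * μ s) + R / 2 * μ s)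
      (c / R / 2 * (∑' s : ℕ, (s : ℝ) * μ s) + R / 2 * 1) :=
    (hmean_summable.hasSum.mul_left _).add (hμ1.mul_left _)
  have hle : ∀ s : ℕ, μ s * walkExp G s x0 (fun p => (G.dist x0 (p (Fin.last s)) : ℝ)) ≤
      c / R / 2 * ((s : ℝ) * μ s) + R / 2 * μ s := by
    intro s
    have := mul_le_mul_of_nonneg_left (hb s) (hμ0 s)
    linarith
  have hS : Summable fun s : ℕ =>
      μ s * walkExp G s x0 (fun p => (G.dist x0 (p (Fin.last s)) : ℝ)) :=
    Summable.of_nonneg_of_le (fun s => mul_nonneg (hμ0 s) (h0 s)) hle hsum.summable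
  have h1 := hS.tsum_le_tsum hle hsum.summable
  rw [hsum.tsum_eq] at h1
  have h2 := mul_le_mul_of_nonneg_left hmean (by positivity : 0 ≤ c / R / 2)
  have h3 : c / R / 2 * M = R / 2 := by
    field_simp
    linarith
  linarith
end
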